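/- If g1, g2 ∈ Ree(q) have orders coprime to 3 and the traces of g1 and g2 (as 7×7 matrices over F_q) are equal, then g1 and g2 are conjugate in Ree(q). -/

import Mathlib

open Matrix

set_option linter.unusedSectionVars false

noncomputable section

namespace ReePaper

variable {F : Type*} [Field F] [Fintype F]

/-- The matrix `α(x)`. -/
def amat (t : ℕ) (x : F) : Matrix (Fin 7) (Fin 7) F :=
  !![1, x^t, 0, 0, -x^(3*t+1), -x^(3*t+2), x^(4*t+2);
     0, 1, x, x^(t+1), -x^(2*t+1), 0, -x^(3*t+2);
     0, 0, 1, x^t, -x^(2*t), 0, x^(3*t+1);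
     0, 0, 0, 1, x^t, 0, 0;
     0, 0, 0, 0, 1, -x, x^(t+1);
     0, 0, 0, 0, 0, 1, -x^t;
     0, 0, 0, 0, 0, 0, 1]

/-- The matrix `β(x)`. -/
def bmat (t : ℕ) (x : F) : Matrix (Fin 7) (Fin 7) F :=
  !![1, 0, -x^t, 0, -x, 0, -x^(t+1);
     0, 1, 0, x^t, 0, -x^(2*t), 0;
     0, 0, 1, 0, 0, 0, x;
     0, 0, 0, 1, 0, x^t, 0;
     0, 0, 0, 0, 1, 0, x^t;
     0, 0, 0, 0, 0, 1, 0;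
     0, 0, 0, 0, 0, 0, 1]

/-- The matrix `γ(x)`. -/
def cmat (t : ℕ) (x : F) : Matrix (Fin 7) (Fin 7) F :=
  !![1, 0, 0, -x^t, 0, -x, -x^(2*t);
     0, 1, 0, 0, -x^t, 0, x;
     0, 0, 1, 0, 0, x^t, 0;
     0, 0, 0, 1, 0, 0, -x^t;
     0, 0, 0, 0, 1, 0, 0;
     0, 0, 0, 0, 0, 1, 0;
     0, 0, 0, 0, 0, 0, 1]

/-- The diagonal matrix `h(λ)`. -/
def hmat (t : ℕ) (l : Fˣ) : Matrix (Fin 7) (Fin 7) F :=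
  Matrix.diagonal ![((l ^ (t : ℤ) : Fˣ) : F), ((l ^ (1 - (t : ℤ)) : Fˣ) : F),
    ((l ^ (2 * (t : ℤ) - 1) : Fˣ) : F), 1, ((l ^ (1 - 2 * (t : ℤ)) : Fˣ) : F),
    ((l ^ ((t : ℤ) - 1) : Fˣ) : F), ((l ^ (-(t : ℤ)) : Fˣ) : F)]

/-- The matrix `Υ`, the antidiagonal matrix with all entries `-1`. -/
def ups : Matrix (Fin 7) (Fin 7) F :=
  !![0, 0, 0, 0, 0, 0, -1;
     0, 0, 0, 0, 0, -1, 0;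
     0, 0, 0, 0, -1, 0, 0;
     0, 0, 0, -1, 0, 0, 0;
     0, 0, -1, 0, 0, 0, 0;
     0, -1, 0, 0, 0, 0, 0;
     -1, 0, 0, 0, 0, 0, 0]

/-- `S(a, b, c) = α(a) β(b) γ(c)`. -/
def Smat (t : ℕ) (a b c : F) : Matrix (Fin 7) (Fin 7) F :=
  amat t a * bmat t b * cmat t c

/-- The Ree group `Ree(q) = ⟨α(x), β(x), γ(x), h(λ), Υ⟩ ≤ GL(7, q)`. -/
def ReeGroup (t : ℕ) : Subgroup (GL (Fin 7) F) :=
  Subgroup.closure {g : GL (Fin 7) F |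
    (∃ x : F, (g : Matrix (Fin 7) (Fin 7) F) = amat t x) ∨
    (∃ x : F, (g : Matrix (Fin 7) (Fin 7) F) = bmat t x) ∨
    (∃ x : F, (g : Matrix (Fin 7) (Fin 7) F) = cmat t x) ∨
    (∃ l : Fˣ, (g : Matrix (Fin 7) (Fin 7) F) = hmat t l) ∨
    (g : Matrix (Fin 7) (Fin 7) F) = ups}

/-- The subgroup `U(q) = ⟨α(x), β(x), γ(x)⟩`. -/
def Usub (t : ℕ) : Subgroup (GL (Fin 7) F) :=
  Subgroup.closure {g : GL (Fin 7) F |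
    (∃ x : F, (g : Matrix (Fin 7) (Fin 7) F) = amat t x) ∨
    (∃ x : F, (g : Matrix (Fin 7) (Fin 7) F) = bmat t x) ∨
    (∃ x : F, (g : Matrix (Fin 7) (Fin 7) F) = cmat t x)}

/-- The subgroup `H(q) = {h(λ) : λ ∈ F_q^×}`. -/
def Hsub (t : ℕ) : Subgroup (GL (Fin 7) F) :=
  Subgroup.closure {g : GL (Fin 7) F |
    ∃ l : Fˣ, (g : Matrix (Fin 7) (Fin 7) F) = hmat t l}

end ReePaper

open ReePaper


set_option linter.unusedSimpArgs false
namespace RX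

section basics
variable {K : Type*} [Field K]

abbrev M7 (K : Type*) := Matrix (Fin 7) (Fin 7) K

/-- The adjoint matrix of the 7-dimensional Lie algebra. -/
def ad (v : Fin 7 → K) : M7 K :=
  !![-v 3, -v 2, v 1, v 0, 0, 0, 0;
     -v 4, v 3, 0, -v 1, v 0, 0, 0;
     v 5, 0, v 3, -v 2, 0, -v 0, 0;
     -v 6, v 5, v 4, 0, -v 2, -v 1, v 0;
     0, v 6, 0, v 4, -v 3, 0, -v 1;
     0, 0, -v 6, v 5, 0, -v 3, v 2;
     0, 0, 0, -v 6, -v 5, v 4, v 3]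

/-- Representatives of the outer derivations. -/
def DM (c : Fin 7 → K) : M7 K :=
  !![0, 0, 0, 0, c 1, c 0, 0;
     0, -c 3, -c 2, 0, 0, 0, -c 0;
     0, -c 4, c 3, 0, 0, 0, -c 1;
     0, 0, 0, 0, 0, 0, 0;
     c 5, 0, 0, 0, -c 3, c 2, 0;
     c 6, 0, 0, 0, c 4, c 3, 0;
     0, -c 6, -c 5, 0, 0, 0, 0]

/-- The invariant form. -/
def Jm : M7 K :=
  !![0, 0, 0, 0, 0, 0, 1;
     0, 0, 0, 0, 0, 1, 0;
     0, 0, 0, 0, 1, 0, 0;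
     0, 0, 0, -1, 0, 0, 0;
     0, 0, 1, 0, 0, 0, 0;
     0, 1, 0, 0, 0, 0, 0;
     1, 0, 0, 0, 0, 0, 0]

/-- `α` with independent parameters. -/
def al (x X : K) : M7 K :=
  !![1, X, 0, 0, -(X^3*x), -(X^3*x^2), X^4*x^2;
     0, 1, x, X*x, -(X^2*x), 0, -(X^3*x^2);
     0, 0, 1, X, -X^2, 0, X^3*x;
     0, 0, 0, 1, X, 0, 0;
     0, 0, 0, 0, 1, -x, X*x;
     0, 0, 0, 0, 0, 1, -X;
     0, 0, 0, 0, 0, 0, 1]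

/-- `β` with independent parameters. -/
def be (x X : K) : M7 K :=
  !![1, 0, -X, 0, -x, 0, -(X*x);
     0, 1, 0, X, 0, -X^2, 0;
     0, 0, 1, 0, 0, 0, x;
     0, 0, 0, 1, 0, X, 0;
     0, 0, 0, 0, 1, 0, X;
     0, 0, 0, 0, 0, 1, 0;
     0, 0, 0, 0, 0, 0, 1]

/-- `γ` with independent parameters. -/
def ga (x X : K) : M7 K :=
  !![1, 0, 0, -X, 0, -x, -X^2;
     0, 1, 0, 0, -X, 0, x;
     0, 0, 1, 0, 0, X, 0;
     0, 0, 0, 1, 0, 0, -X;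
     0, 0, 0, 0, 1, 0, 0;
     0, 0, 0, 0, 0, 1, 0;
     0, 0, 0, 0, 0, 0, 1]

/-- The torus. -/
def Tm (y z : K) : M7 K :=
  Matrix.diagonal ![y * z, y, z, 1, z⁻¹, y⁻¹, (y * z)⁻¹]

/-- Automorphism of the Lie algebra. -/
def Aut (x : M7 K) : Prop := ∀ v, x * ad v = ad (x *ᵥ v) * x

/-- `x` is orthogonal. -/
def Orth (x : M7 K) : Prop := xᵀ * Jm * x = Jm

/-- `y` is the image of `x` under the exceptional isogeny. -/
def Inter (x y : M7 K) : Prop := ∀ c, ∃ w, x * DM c = (DM (y *ᵥ c) + ad w) * x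

theorem mulVec7 (A : M7 K) (v : Fin 7 → K) (i) : (A *ᵥ v) i =
    A i 0 * v 0 + A i 1 * v 1 + A i 2 * v 2 + A i 3 * v 3 + A i 4 * v 4 + A i 5 * v 5
      + A i 6 * v 6 := by
  simp [Matrix.mulVec, dotProduct, Fin.sum_univ_seven]

theorem mul7 (A B : M7 K) (i j) : (A * B) i j =
    A i 0 * B 0 j + A i 1 * B 1 j + A i 2 * B 2 j + A i 3 * B 3 j + A i 4 * B 4 j
      + A i 5 * B 5 j + A i 6 * B 6 j := by
  simp [Matrix.mul_apply, Fin.sum_univ_seven]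

theorem lit_mul {K : Type*} [Field K] (a00 a01 a02 a03 a04 a05 a06 a10 a11 a12 a13 a14 a15 a16 a20 a21 a22 a23 a24 a25 a26 a30 a31 a32
    a33 a34 a35 a36 a40 a41 a42 a43 a44 a45 a46 a50 a51 a52 a53 a54 a55 a56 a60 a61 a62 a63 a64 a65
    a66
    b00 b01 b02 b03 b04 b05 b06 b10 b11 b12 b13 b14 b15 b16 b20 b21 b22 b23 b24 b25 b26 b30 b31 b32
    b33 b34 b35 b36 b40 b41 b42 b43 b44 b45 b46 b50 b51 b52 b53 b54 b55 b56 b60 b61 b62 b63 b64 b65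
    b66 : K) :
    !![a00, a01, a02, a03, a04, a05, a06; a10, a11, a12, a13, a14, a15, a16; a20, a21, a22, a23,
    a24, a25, a26; a30, a31, a32, a33, a34, a35, a36; a40, a41, a42, a43, a44, a45, a46; a50, a51,
    a52, a53, a54, a55, a56; a60, a61, a62, a63, a64, a65, a66] *
    !![b00, b01, b02, b03, b04, b05, b06; b10, b11, b12, b13, b14, b15, b16; b20, b21, b22, b23,
    b24, b25, b26; b30, b31, b32, b33, b34, b35, b36; b40, b41, b42, b43, b44, b45, b46; b50, b51,
    b52, b53, b54, b55, b56; b60, b61, b62, b63, b64, b65, b66] =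
    !![a00 * b00 + a01 * b10 + a02 * b20 + a03 * b30 + a04 * b40 + a05 * b50 + a06 * b60, a00 * b01
    + a01 * b11 + a02 * b21 + a03 * b31 + a04 * b41 + a05 * b51 + a06 * b61, a00 * b02 + a01 * b12
    + a02 * b22 + a03 * b32 + a04 * b42 + a05 * b52 + a06 * b62, a00 * b03 + a01 * b13 + a02 * b23
    + a03 * b33 + a04 * b43 + a05 * b53 + a06 * b63, a00 * b04 + a01 * b14 + a02 * b24 + a03 * b34
    + a04 * b44 + a05 * b54 + a06 * b64, a00 * b05 + a01 * b15 + a02 * b25 + a03 * b35 + a04 * b45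
    + a05 * b55 + a06 * b65, a00 * b06 + a01 * b16 + a02 * b26 + a03 * b36 + a04 * b46 + a05 * b56
    + a06 * b66; a10 * b00 + a11 * b10 + a12 * b20 + a13 * b30 + a14 * b40 + a15 * b50 + a16 * b60,
    a10 * b01 + a11 * b11 + a12 * b21 + a13 * b31 + a14 * b41 + a15 * b51 + a16 * b61, a10 * b02 +
    a11 * b12 + a12 * b22 + a13 * b32 + a14 * b42 + a15 * b52 + a16 * b62, a10 * b03 + a11 * b13 +
    a12 * b23 + a13 * b33 + a14 * b43 + a15 * b53 + a16 * b63, a10 * b04 + a11 * b14 + a12 * b24 +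
    a13 * b34 + a14 * b44 + a15 * b54 + a16 * b64, a10 * b05 + a11 * b15 + a12 * b25 + a13 * b35 +
    a14 * b45 + a15 * b55 + a16 * b65, a10 * b06 + a11 * b16 + a12 * b26 + a13 * b36 + a14 * b46 +
    a15 * b56 + a16 * b66; a20 * b00 + a21 * b10 + a22 * b20 + a23 * b30 + a24 * b40 + a25 * b50 +
    a26 * b60, a20 * b01 + a21 * b11 + a22 * b21 + a23 * b31 + a24 * b41 + a25 * b51 + a26 * b61,
    a20 * b02 + a21 * b12 + a22 * b22 + a23 * b32 + a24 * b42 + a25 * b52 + a26 * b62, a20 * b03 +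
    a21 * b13 + a22 * b23 + a23 * b33 + a24 * b43 + a25 * b53 + a26 * b63, a20 * b04 + a21 * b14 +
    a22 * b24 + a23 * b34 + a24 * b44 + a25 * b54 + a26 * b64, a20 * b05 + a21 * b15 + a22 * b25 +
    a23 * b35 + a24 * b45 + a25 * b55 + a26 * b65, a20 * b06 + a21 * b16 + a22 * b26 + a23 * b36 +
    a24 * b46 + a25 * b56 + a26 * b66; a30 * b00 + a31 * b10 + a32 * b20 + a33 * b30 + a34 * b40 +
    a35 * b50 + a36 * b60, a30 * b01 + a31 * b11 + a32 * b21 + a33 * b31 + a34 * b41 + a35 * b51 +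
    a36 * b61, a30 * b02 + a31 * b12 + a32 * b22 + a33 * b32 + a34 * b42 + a35 * b52 + a36 * b62,
    a30 * b03 + a31 * b13 + a32 * b23 + a33 * b33 + a34 * b43 + a35 * b53 + a36 * b63, a30 * b04 +
    a31 * b14 + a32 * b24 + a33 * b34 + a34 * b44 + a35 * b54 + a36 * b64, a30 * b05 + a31 * b15 +
    a32 * b25 + a33 * b35 + a34 * b45 + a35 * b55 + a36 * b65, a30 * b06 + a31 * b16 + a32 * b26 +
    a33 * b36 + a34 * b46 + a35 * b56 + a36 * b66; a40 * b00 + a41 * b10 + a42 * b20 + a43 * b30 +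
    a44 * b40 + a45 * b50 + a46 * b60, a40 * b01 + a41 * b11 + a42 * b21 + a43 * b31 + a44 * b41 +
    a45 * b51 + a46 * b61, a40 * b02 + a41 * b12 + a42 * b22 + a43 * b32 + a44 * b42 + a45 * b52 +
    a46 * b62, a40 * b03 + a41 * b13 + a42 * b23 + a43 * b33 + a44 * b43 + a45 * b53 + a46 * b63,
    a40 * b04 + a41 * b14 + a42 * b24 + a43 * b34 + a44 * b44 + a45 * b54 + a46 * b64, a40 * b05 +
    a41 * b15 + a42 * b25 + a43 * b35 + a44 * b45 + a45 * b55 + a46 * b65, a40 * b06 + a41 * b16 +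
    a42 * b26 + a43 * b36 + a44 * b46 + a45 * b56 + a46 * b66; a50 * b00 + a51 * b10 + a52 * b20 +
    a53 * b30 + a54 * b40 + a55 * b50 + a56 * b60, a50 * b01 + a51 * b11 + a52 * b21 + a53 * b31 +
    a54 * b41 + a55 * b51 + a56 * b61, a50 * b02 + a51 * b12 + a52 * b22 + a53 * b32 + a54 * b42 +
    a55 * b52 + a56 * b62, a50 * b03 + a51 * b13 + a52 * b23 + a53 * b33 + a54 * b43 + a55 * b53 +
    a56 * b63, a50 * b04 + a51 * b14 + a52 * b24 + a53 * b34 + a54 * b44 + a55 * b54 + a56 * b64,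
    a50 * b05 + a51 * b15 + a52 * b25 + a53 * b35 + a54 * b45 + a55 * b55 + a56 * b65, a50 * b06 +
    a51 * b16 + a52 * b26 + a53 * b36 + a54 * b46 + a55 * b56 + a56 * b66; a60 * b00 + a61 * b10 +
    a62 * b20 + a63 * b30 + a64 * b40 + a65 * b50 + a66 * b60, a60 * b01 + a61 * b11 + a62 * b21 +
    a63 * b31 + a64 * b41 + a65 * b51 + a66 * b61, a60 * b02 + a61 * b12 + a62 * b22 + a63 * b32 +
    a64 * b42 + a65 * b52 + a66 * b62, a60 * b03 + a61 * b13 + a62 * b23 + a63 * b33 + a64 * b43 +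
    a65 * b53 + a66 * b63, a60 * b04 + a61 * b14 + a62 * b24 + a63 * b34 + a64 * b44 + a65 * b54 +
    a66 * b64, a60 * b05 + a61 * b15 + a62 * b25 + a63 * b35 + a64 * b45 + a65 * b55 + a66 * b65,
    a60 * b06 + a61 * b16 + a62 * b26 + a63 * b36 + a64 * b46 + a65 * b56 + a66 * b66] := by
  ext i j
  rw [mul7]
  fin_cases i <;> fin_cases j <;> rfl

theorem lit_add {K : Type*} [Field K] (a00 a01 a02 a03 a04 a05 a06 a10 a11 a12 a13 a14 a15 a16 a20 a21 a22 a23 a24 a25 a26 a30 a31 a32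
    a33 a34 a35 a36 a40 a41 a42 a43 a44 a45 a46 a50 a51 a52 a53 a54 a55 a56 a60 a61 a62 a63 a64 a65
    a66
    b00 b01 b02 b03 b04 b05 b06 b10 b11 b12 b13 b14 b15 b16 b20 b21 b22 b23 b24 b25 b26 b30 b31 b32
    b33 b34 b35 b36 b40 b41 b42 b43 b44 b45 b46 b50 b51 b52 b53 b54 b55 b56 b60 b61 b62 b63 b64 b65
    b66 : K) :
    !![a00, a01, a02, a03, a04, a05, a06; a10, a11, a12, a13, a14, a15, a16; a20, a21, a22, a23,
    a24, a25, a26; a30, a31, a32, a33, a34, a35, a36; a40, a41, a42, a43, a44, a45, a46; a50, a51,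
    a52, a53, a54, a55, a56; a60, a61, a62, a63, a64, a65, a66] +
    !![b00, b01, b02, b03, b04, b05, b06; b10, b11, b12, b13, b14, b15, b16; b20, b21, b22, b23,
    b24, b25, b26; b30, b31, b32, b33, b34, b35, b36; b40, b41, b42, b43, b44, b45, b46; b50, b51,
    b52, b53, b54, b55, b56; b60, b61, b62, b63, b64, b65, b66] =
    !![a00 + b00, a01 + b01, a02 + b02, a03 + b03, a04 + b04, a05 + b05, a06 + b06; a10 + b10, a11
    + b11, a12 + b12, a13 + b13, a14 + b14, a15 + b15, a16 + b16; a20 + b20, a21 + b21, a22 + b22,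
    a23 + b23, a24 + b24, a25 + b25, a26 + b26; a30 + b30, a31 + b31, a32 + b32, a33 + b33, a34 +
    b34, a35 + b35, a36 + b36; a40 + b40, a41 + b41, a42 + b42, a43 + b43, a44 + b44, a45 + b45,
    a46 + b46; a50 + b50, a51 + b51, a52 + b52, a53 + b53, a54 + b54, a55 + b55, a56 + b56; a60 +
    b60, a61 + b61, a62 + b62, a63 + b63, a64 + b64, a65 + b65, a66 + b66] := by
  ext i j
  fin_cases i <;> fin_cases j <;> rfl

theorem lit_vec {K : Type*} [Field K] (a00 a01 a02 a03 a04 a05 a06 a10 a11 a12 a13 a14 a15 a16 a20 a21 a22 a23 a24 a25 a26 a30 a31 a32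
    a33 a34 a35 a36 a40 a41 a42 a43 a44 a45 a46 a50 a51 a52 a53 a54 a55 a56 a60 a61 a62 a63 a64 a65
    a66 : K) (v : Fin 7 → K) :
    !![a00, a01, a02, a03, a04, a05, a06; a10, a11, a12, a13, a14, a15, a16; a20, a21, a22, a23,
    a24, a25, a26; a30, a31, a32, a33, a34, a35, a36; a40, a41, a42, a43, a44, a45, a46; a50, a51,
    a52, a53, a54, a55, a56; a60, a61, a62, a63, a64, a65, a66] *ᵥ v =
    ![a00 * v 0 + a01 * v 1 + a02 * v 2 + a03 * v 3 + a04 * v 4 + a05 * v 5 + a06 * v 6, a10 * v 0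
    + a11 * v 1 + a12 * v 2 + a13 * v 3 + a14 * v 4 + a15 * v 5 + a16 * v 6, a20 * v 0 + a21 * v 1
    + a22 * v 2 + a23 * v 3 + a24 * v 4 + a25 * v 5 + a26 * v 6, a30 * v 0 + a31 * v 1 + a32 * v 2
    + a33 * v 3 + a34 * v 4 + a35 * v 5 + a36 * v 6, a40 * v 0 + a41 * v 1 + a42 * v 2 + a43 * v 3
    + a44 * v 4 + a45 * v 5 + a46 * v 6, a50 * v 0 + a51 * v 1 + a52 * v 2 + a53 * v 3 + a54 * v 4
    + a55 * v 5 + a56 * v 6, a60 * v 0 + a61 * v 1 + a62 * v 2 + a63 * v 3 + a64 * v 4 + a65 * v 5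
    + a66 * v 6] := by
  ext i
  rw [mulVec7]
  fin_cases i <;> rfl

theorem lit_eq {K : Type*} [Field K] {a00 a01 a02 a03 a04 a05 a06 a10 a11 a12 a13 a14 a15 a16 a20 a21 a22 a23 a24 a25 a26 a30 a31 a32
    a33 a34 a35 a36 a40 a41 a42 a43 a44 a45 a46 a50 a51 a52 a53 a54 a55 a56 a60 a61 a62 a63 a64 a65
    a66
    b00 b01 b02 b03 b04 b05 b06 b10 b11 b12 b13 b14 b15 b16 b20 b21 b22 b23 b24 b25 b26 b30 b31 b32
    b33 b34 b35 b36 b40 b41 b42 b43 b44 b45 b46 b50 b51 b52 b53 b54 b55 b56 b60 b61 b62 b63 b64 b65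
    b66 : K}
    (h00 : a00 = b00) (h01 : a01 = b01) (h02 : a02 = b02) (h03 : a03 = b03) (h04 : a04 = b04) (h05
    : a05 = b05) (h06 : a06 = b06) (h10 : a10 = b10) (h11 : a11 = b11) (h12 : a12 = b12) (h13 : a13
    = b13) (h14 : a14 = b14) (h15 : a15 = b15) (h16 : a16 = b16) (h20 : a20 = b20) (h21 : a21 =
    b21) (h22 : a22 = b22) (h23 : a23 = b23) (h24 : a24 = b24) (h25 : a25 = b25) (h26 : a26 = b26)
    (h30 : a30 = b30) (h31 : a31 = b31) (h32 : a32 = b32) (h33 : a33 = b33) (h34 : a34 = b34) (h35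
    : a35 = b35) (h36 : a36 = b36) (h40 : a40 = b40) (h41 : a41 = b41) (h42 : a42 = b42) (h43 : a43
    = b43) (h44 : a44 = b44) (h45 : a45 = b45) (h46 : a46 = b46) (h50 : a50 = b50) (h51 : a51 =
    b51) (h52 : a52 = b52) (h53 : a53 = b53) (h54 : a54 = b54) (h55 : a55 = b55) (h56 : a56 = b56)
    (h60 : a60 = b60) (h61 : a61 = b61) (h62 : a62 = b62) (h63 : a63 = b63) (h64 : a64 = b64) (h65
    : a65 = b65) (h66 : a66 = b66) :
    !![a00, a01, a02, a03, a04, a05, a06; a10, a11, a12, a13, a14, a15, a16; a20, a21, a22, a23,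
    a24, a25, a26; a30, a31, a32, a33, a34, a35, a36; a40, a41, a42, a43, a44, a45, a46; a50, a51,
    a52, a53, a54, a55, a56; a60, a61, a62, a63, a64, a65, a66] =
    !![b00, b01, b02, b03, b04, b05, b06; b10, b11, b12, b13, b14, b15, b16; b20, b21, b22, b23,
    b24, b25, b26; b30, b31, b32, b33, b34, b35, b36; b40, b41, b42, b43, b44, b45, b46; b50, b51,
    b52, b53, b54, b55, b56; b60, b61, b62, b63, b64, b65, b66] := by
  subst h00 h01 h02 h03 h04 h05 h06 h10 h11 h12 h13 h14 h15 h16 h20 h21 h22 h23 h24 h25 h26 h30 h31 h32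
    h33 h34 h35 h36 h40 h41 h42 h43 h44 h45 h46 h50 h51 h52 h53 h54 h55 h56 h60 h61 h62 h63 h64 h65
    h66
  rfl

theorem lit_T {K : Type*} [Field K] (a00 a01 a02 a03 a04 a05 a06 a10 a11 a12 a13 a14 a15 a16 a20 a21 a22 a23 a24 a25 a26 a30 a31 a32
    a33 a34 a35 a36 a40 a41 a42 a43 a44 a45 a46 a50 a51 a52 a53 a54 a55 a56 a60 a61 a62 a63 a64 a65
    a66 : K) :
    (!![a00, a01, a02, a03, a04, a05, a06; a10, a11, a12, a13, a14, a15, a16; a20, a21, a22, a23,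
    a24, a25, a26; a30, a31, a32, a33, a34, a35, a36; a40, a41, a42, a43, a44, a45, a46; a50, a51,
    a52, a53, a54, a55, a56; a60, a61, a62, a63, a64, a65, a66])ᵀ =
    !![a00, a10, a20, a30, a40, a50, a60; a01, a11, a21, a31, a41, a51, a61; a02, a12, a22, a32,
    a42, a52, a62; a03, a13, a23, a33, a43, a53, a63; a04, a14, a24, a34, a44, a54, a64; a05, a15,
    a25, a35, a45, a55, a65; a06, a16, a26, a36, a46, a56, a66] := by
  apply Matrix.ext
  simp only [Fin.forall_fin_succ, Matrix.transpose_apply]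
  simp

set_option maxHeartbeats 2000000
set_option linter.unusedSimpArgs false

theorem al_aut [CharP K 3] (x X : K) : Aut (al x X) := by
  intro v
  have h3 : (3:K) = 0 := CharP.cast_eq_zero K 3
  rw [al, lit_vec]
  simp only [ad, Matrix.cons_val]
  rw [lit_mul, lit_mul]
  apply lit_eq <;>
    (simp only [mul_zero, zero_mul, add_zero, zero_add, mul_one, one_mul, neg_zero]; try grind)

theorem al_orth [CharP K 3] (x X : K) : Orth (al x X) := by
  have h3 : (3:K) = 0 := CharP.cast_eq_zero K 3
  rw [Orth, al, Jm, lit_T]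
  rw [lit_mul]
  simp only [mul_zero, zero_mul, add_zero, zero_add, mul_one, one_mul, neg_zero]
  rw [lit_mul]
  apply lit_eq <;>
    (simp only [mul_zero, zero_mul, add_zero, zero_add, mul_one, one_mul, neg_zero]; try grind)

theorem al_inter [CharP K 3] (x X : K) : Inter (al x X) (al (X^3) x) := by
  intro c
  have h3 : (3:K) = 0 := CharP.cast_eq_zero K 3
  refine ⟨![X^2*c 2 + X^5*c 5*x^2, -X*c 2 + X*c 3*x + X^4*c 5*x^2, X*c 3 - X^4*c 5*x,
    X^3*c 5*x + X^3*c 6*x^2, X^2*c 5*x, -X^2*c 5, -X*c 5], ?_⟩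
  rw [al, al, lit_vec]
  simp only [ad, DM, Matrix.cons_val]
  rw [lit_add, lit_mul, lit_mul]
  apply lit_eq <;>
    (simp only [mul_zero, zero_mul, add_zero, zero_add, mul_one, one_mul, neg_zero]; try grind)

theorem be_aut [CharP K 3] (x X : K) : Aut (be x X) := by
  intro v
  have h3 : (3:K) = 0 := CharP.cast_eq_zero K 3
  rw [be, lit_vec]
  simp only [ad, Matrix.cons_val]
  rw [lit_mul, lit_mul]
  apply lit_eq <;>
    (simp only [mul_zero, zero_mul, add_zero, zero_add, mul_one, one_mul, neg_zero]; try grind)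

theorem be_orth [CharP K 3] (x X : K) : Orth (be x X) := by
  have h3 : (3:K) = 0 := CharP.cast_eq_zero K 3
  rw [Orth, be, Jm, lit_T]
  rw [lit_mul]
  simp only [mul_zero, zero_mul, add_zero, zero_add, mul_one, one_mul, neg_zero]
  rw [lit_mul]
  apply lit_eq <;>
    (simp only [mul_zero, zero_mul, add_zero, zero_add, mul_one, one_mul, neg_zero]; try grind)

theorem be_inter [CharP K 3] (x X : K) : Inter (be x X) (be (X^3) x) := by
  intro c
  have h3 : (3:K) = 0 := CharP.cast_eq_zero K 3
  refine ⟨![-X^2*c 4 - X^2*c 6*x, -X*c 3, -X*c 4 - X*c 6*x, c 5*x, X^2*c 6, 0, -X*c 6], ?_⟩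
  rw [be, be, lit_vec]
  simp only [ad, DM, Matrix.cons_val]
  rw [lit_add, lit_mul, lit_mul]
  apply lit_eq <;>
    (simp only [mul_zero, zero_mul, add_zero, zero_add, mul_one, one_mul, neg_zero]; try grind)

theorem ga_aut [CharP K 3] (x X : K) : Aut (ga x X) := by
  intro v
  have h3 : (3:K) = 0 := CharP.cast_eq_zero K 3
  rw [ga, lit_vec]
  simp only [ad, Matrix.cons_val]
  rw [lit_mul, lit_mul]
  apply lit_eq <;>
    (simp only [mul_zero, zero_mul, add_zero, zero_add, mul_one, one_mul, neg_zero]; try grind)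

theorem ga_orth [CharP K 3] (x X : K) : Orth (ga x X) := by
  have h3 : (3:K) = 0 := CharP.cast_eq_zero K 3
  rw [Orth, ga, Jm, lit_T]
  rw [lit_mul]
  simp only [mul_zero, zero_mul, add_zero, zero_add, mul_one, one_mul, neg_zero]
  rw [lit_mul]
  apply lit_eq <;>
    (simp only [mul_zero, zero_mul, add_zero, zero_add, mul_one, one_mul, neg_zero]; try grind)

theorem ga_inter [CharP K 3] (x X : K) : Inter (ga x X) (ga (X^3) x) := by
  intro c
  have h3 : (3:K) = 0 := CharP.cast_eq_zero K 3
  refine ⟨![-X*c 6*x, X^2*c 5, -X^2*c 6, c 6*x, X*c 5, X*c 6, 0], ?_⟩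
  rw [ga, ga, lit_vec]
  simp only [ad, DM, Matrix.cons_val]
  rw [lit_add, lit_mul, lit_mul]
  apply lit_eq <;>
    (simp only [mul_zero, zero_mul, add_zero, zero_add, mul_one, one_mul, neg_zero]; try grind)

theorem ups_aut [CharP K 3] : Aut (ups : M7 K) := by
  intro v
  have h3 : (3:K) = 0 := CharP.cast_eq_zero K 3
  rw [ups, lit_vec]
  simp only [ad, Matrix.cons_val]
  rw [lit_mul, lit_mul]
  apply lit_eq <;>
    (simp only [mul_zero, zero_mul, add_zero, zero_add, mul_one, one_mul, neg_zero]; try grind)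

theorem ups_orth [CharP K 3] : Orth (ups : M7 K) := by
  have h3 : (3:K) = 0 := CharP.cast_eq_zero K 3
  rw [Orth, ups, Jm, lit_T]
  rw [lit_mul]
  simp only [mul_zero, zero_mul, add_zero, zero_add, mul_one, one_mul, neg_zero]
  rw [lit_mul]
  apply lit_eq <;>
    (simp only [mul_zero, zero_mul, add_zero, zero_add, mul_one, one_mul, neg_zero]; try grind)

theorem ad_zero : ad (0 : Fin 7 → K) = 0 := by
  ext i j
  fin_cases i <;> fin_cases j <;> simp [ad]

theorem ups_inter [CharP K 3] : Inter (ups : M7 K) ups := by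
  intro c
  refine ⟨0, ?_⟩
  rw [ad_zero, add_zero, ups, lit_vec]
  simp only [DM, Matrix.cons_val]
  rw [lit_mul, lit_mul]
  apply lit_eq <;>
    (simp only [mul_zero, zero_mul, add_zero, zero_add, mul_one, one_mul, neg_zero]; try ring)

theorem Tm_aut [CharP K 3] (y z : K) (hy : y ≠ 0) (hz : z ≠ 0) : Aut (Tm y z) := by
  intro v
  ext i j
  rw [Tm, Matrix.diagonal_mul, Matrix.mul_diagonal]
  fin_cases i <;> fin_cases j <;>
    (simp only [ad, Matrix.mulVec_diagonal, Matrix.of_apply, Matrix.cons_val', Matrix.cons_val,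
      Fin.zero_eta, Fin.mk_one, Fin.reduceFinMk, mul_zero, zero_mul, add_zero, zero_add,
      mul_one, one_mul, mul_inv]; try field_simp)

theorem Tm_orth [CharP K 3] (y z : K) (hy : y ≠ 0) (hz : z ≠ 0) : Orth (Tm y z) := by
  ext i j
  rw [Tm, Matrix.diagonal_transpose, Matrix.mul_diagonal, Matrix.diagonal_mul]
  fin_cases i <;> fin_cases j <;>
    (simp only [Jm, Matrix.of_apply, Matrix.cons_val', Matrix.cons_val,
      Fin.zero_eta, Fin.mk_one, Fin.reduceFinMk, mul_zero, zero_mul, add_zero, zero_add,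
      mul_one, one_mul, mul_inv]; try field_simp)

theorem Tm_inter [CharP K 3] (y z : K) (hy : y ≠ 0) (hz : z ≠ 0) :
    Inter (Tm y z) (Tm (y * z ^ 2) (y * z⁻¹)) := by
  intro c
  refine ⟨0, ?_⟩
  rw [ad_zero, add_zero]
  ext i j
  rw [Tm, Matrix.diagonal_mul, Matrix.mul_diagonal]
  fin_cases i <;> fin_cases j <;>
    (simp only [DM, Tm, Matrix.mulVec_diagonal, Matrix.of_apply, Matrix.cons_val', Matrix.cons_val,
      Fin.zero_eta, Fin.mk_one, Fin.reduceFinMk, mul_zero, zero_mul, add_zero, zero_add,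
      mul_one, one_mul, mul_inv, inv_inv, neg_zero]; try field_simp)

end basics
end RX

namespace RX

section group
variable {K : Type*} [Field K]

abbrev G7 (K : Type*) [Field K] := GL (Fin 7) K

theorem ad_add (u v : Fin 7 → K) : ad (u + v) = ad u + ad v := by
  ext i j
  fin_cases i <;> fin_cases j <;> simp [ad] <;> ring

theorem ad_neg (u : Fin 7 → K) : ad (-u) = -ad u := by
  ext i j
  fin_cases i <;> fin_cases j <;> simp [ad]

theorem ad_smul (a : K) (u : Fin 7 → K) : ad (a • u) = a • ad u := by
  ext i j
  fin_cases i <;> fin_cases j <;> simp [ad]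

theorem DM_smul (a : K) (u : Fin 7 → K) : DM (a • u) = a • DM u := by
  ext i j
  fin_cases i <;> fin_cases j <;> simp [DM]

/-- coordinates of the outer part -/
def PiM (A : M7 K) : Fin 7 → K :=
  ![A 0 5, A 0 4, -A 1 2, -A 1 1 - A 0 0, -A 2 1, A 4 0, A 5 0]

/-- coordinates of the inner part -/
def omM (A : M7 K) : Fin 7 → K :=
  ![A 0 3, A 0 2, -A 0 1, -A 0 0, -A 1 0, A 2 0, -A 3 0]

theorem PiM_eq (c w : Fin 7 → K) : PiM (DM c + ad w) = c := by
  ext i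
  fin_cases i <;> simp [PiM, DM, ad]

theorem omM_eq (c w : Fin 7 → K) : omM (DM c + ad w) = w := by
  ext i
  fin_cases i <;> simp [omM, DM, ad]

theorem Aut.mul {x y : M7 K} (hx : Aut x) (hy : Aut y) : Aut (x * y) := by
  intro v
  rw [mul_assoc, hy, ← mul_assoc, hx, mul_assoc, Matrix.mulVec_mulVec]

theorem Aut.inv {x : G7 K} (hx : Aut (x : M7 K)) : Aut ((x⁻¹ : G7 K) : M7 K) := by
  intro v
  have h := hx ((x⁻¹ : G7 K) *ᵥ v)
  rw [Matrix.mulVec_mulVec, ← Units.val_mul, mul_inv_cancel, Units.val_one, Matrix.one_mulVec] at h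
  have h2 : ((x⁻¹ : G7 K) : M7 K) * (x * ad ((x⁻¹ : G7 K) *ᵥ v)) * ((x⁻¹ : G7 K) : M7 K)
    = ((x⁻¹ : G7 K) : M7 K) * (ad v * x) * ((x⁻¹ : G7 K) : M7 K) := by rw [h]
  simpa [mul_assoc, ← Units.val_mul] using h2.symm

theorem Aut.one : Aut (1 : M7 K) := by
  intro v; simp

theorem Inter.mul {x y x' y' : M7 K} (ax : Aut x) (hx : Inter x x') (hy : Inter y y') :
    Inter (x * y) (x' * y') := by
  intro c
  obtain ⟨w, hw⟩ := hy c
  obtain ⟨u, hu⟩ := hx (y' *ᵥ c)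
  refine ⟨u + x *ᵥ w, ?_⟩
  rw [mul_assoc, hw, ← mul_assoc, mul_add, hu, ax, ad_add, ← Matrix.mulVec_mulVec,
    ← add_mul, ← mul_assoc, add_assoc]

theorem Inter.inv {x x' : G7 K} (ax : Aut (x : M7 K)) (hx : Inter (x : M7 K) (x' : M7 K)) :
    Inter ((x⁻¹ : G7 K) : M7 K) ((x'⁻¹ : G7 K) : M7 K) := by
  intro c
  obtain ⟨w, hw⟩ := hx (((x'⁻¹ : G7 K) : M7 K) *ᵥ c)
  rw [Matrix.mulVec_mulVec, ← Units.val_mul, mul_inv_cancel, Units.val_one,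
    Matrix.one_mulVec] at hw
  refine ⟨-(((x⁻¹ : G7 K) : M7 K) *ᵥ w), ?_⟩
  have h1 := ax.inv w
  have h2 : ((x⁻¹ : G7 K) : M7 K) * (x * DM (((x'⁻¹ : G7 K) : M7 K) *ᵥ c)) *
      ((x⁻¹ : G7 K) : M7 K)
    = ((x⁻¹ : G7 K) : M7 K) * ((DM c + ad w) * x) * ((x⁻¹ : G7 K) : M7 K) := by rw [hw]
  have h3 : DM (((x'⁻¹ : G7 K) : M7 K) *ᵥ c) * ((x⁻¹ : G7 K) : M7 K) =
      ((x⁻¹ : G7 K) : M7 K) * (DM c + ad w) := by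
    simpa [mul_assoc, ← Units.val_mul] using h2
  rw [ad_neg, add_mul, h3, mul_add, h1]
  simp

theorem Inter.one : Inter (1 : M7 K) 1 := by
  intro c; exact ⟨0, by simp [ad_zero]⟩

theorem Inter.unique {x : G7 K} {y y' : M7 K} (h : Inter (x : M7 K) y)
    (h' : Inter (x : M7 K) y') : y = y' := by
  apply Matrix.mulVec_injective
  funext c
  obtain ⟨w, hw⟩ := h c
  obtain ⟨w', hw'⟩ := h' c
  rw [hw] at hw'
  have := (Units.mul_left_inj x).1 hw'
  have h2 := congrArg PiM this
  rwa [PiM_eq, PiM_eq] at h2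

theorem Orth.mul {x y : M7 K} (hx : Orth x) (hy : Orth y) : Orth (x * y) := by
  unfold Orth at *
  rw [Matrix.transpose_mul]
  calc yᵀ * xᵀ * Jm * (x * y) = yᵀ * (xᵀ * Jm * x) * y := by simp only [mul_assoc]
    _ = Jm := by rw [hx, hy]

theorem Orth.inv {x : G7 K} (hx : Orth (x : M7 K)) : Orth ((x⁻¹ : G7 K) : M7 K) := by
  unfold Orth at *
  have h1 : (x : M7 K) * ((x⁻¹ : G7 K) : M7 K) = 1 := by
    rw [← Units.val_mul, mul_inv_cancel, Units.val_one]
  have h2 : ((x⁻¹ : G7 K) : M7 K)ᵀ * (x : M7 K)ᵀ = 1 := by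
    rw [← Matrix.transpose_mul, h1, Matrix.transpose_one]
  calc ((x⁻¹ : G7 K) : M7 K)ᵀ * Jm * ((x⁻¹ : G7 K) : M7 K)
      = ((x⁻¹ : G7 K) : M7 K)ᵀ * ((x : M7 K)ᵀ * Jm * (x : M7 K)) * ((x⁻¹ : G7 K) : M7 K) := by rw [hx]
    _ = (((x⁻¹ : G7 K) : M7 K)ᵀ * (x : M7 K)ᵀ) * Jm * ((x : M7 K) * ((x⁻¹ : G7 K) : M7 K)) := by
        simp only [mul_assoc]
    _ = Jm := by rw [h1, h2]; simp

theorem Orth.one : Orth (1 : M7 K) := by simp [Orth]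

/-- generators of the graph of the exceptional isogeny -/
def Gens (K : Type*) [Field K] : Set (G7 K × G7 K) := {p |
  (∃ x X, (p.1 : M7 K) = al x X ∧ (p.2 : M7 K) = al (X^3) x) ∨
  (∃ x X, (p.1 : M7 K) = be x X ∧ (p.2 : M7 K) = be (X^3) x) ∨
  (∃ x X, (p.1 : M7 K) = ga x X ∧ (p.2 : M7 K) = ga (X^3) x) ∨
  (∃ y z, y ≠ 0 ∧ z ≠ 0 ∧ (p.1 : M7 K) = Tm y z ∧ (p.2 : M7 K) = Tm (y * z ^ 2) (y * z⁻¹)) ∨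
  ((p.1 : M7 K) = ups ∧ (p.2 : M7 K) = ups)}

/-- graph of the exceptional isogeny -/
def GG (K : Type*) [Field K] : Subgroup (G7 K × G7 K) := Subgroup.closure (Gens K)

theorem det_al (x X : K) : (al x X).det = 1 := by
  rw [Matrix.det_of_isUpperTriangular]
  · simp [al, Fin.prod_univ_succ]
  · intro i j h
    fin_cases i <;> fin_cases j <;> first | rfl | (exfalso; revert h; decide)

theorem det_be (x X : K) : (be x X).det = 1 := by
  rw [Matrix.det_of_isUpperTriangular]
  · simp [be, Fin.prod_univ_succ]
  · intro i j h
    fin_cases i <;> fin_cases j <;> first | rfl | (exfalso; revert h; decide)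

theorem det_ga (x X : K) : (ga x X).det = 1 := by
  rw [Matrix.det_of_isUpperTriangular]
  · simp [ga, Fin.prod_univ_succ]
  · intro i j h
    fin_cases i <;> fin_cases j <;> first | rfl | (exfalso; revert h; decide)

theorem det_Tm (y z : K) (hy : y ≠ 0) (hz : z ≠ 0) : (Tm y z).det = 1 := by
  rw [Tm, Matrix.det_diagonal]
  simp [Fin.prod_univ_succ]
  field_simp

theorem det_ups : (ups : M7 K).det = 1 := by
  have h : (ups : M7 K) = -((Fin.revPerm : Equiv.Perm (Fin 7)).permMatrix K) := by
    ext i j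
    fin_cases i <;> fin_cases j <;> simp [ups, Equiv.Perm.permMatrix, PEquiv.toMatrix_apply, Fin.ext_iff]
  rw [h, Matrix.det_neg, Matrix.det_permutation]
  have : Equiv.Perm.sign (Fin.revPerm : Equiv.Perm (Fin 7)) = -1 := by decide
  rw [this]; norm_num

/-- matrix of determinant one as a unit -/
def mkG (A : M7 K) (h : A.det = 1) : G7 K :=
  Matrix.GeneralLinearGroup.mkOfDetNeZero A (by rw [h]; exact one_ne_zero)

@[simp] theorem mkG_val (A : M7 K) (h : A.det = 1) : ((mkG A h : G7 K) : M7 K) = A := rfl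

theorem GG_al (x X : K) : (mkG (al x X) (det_al _ _), mkG (al (X^3) x) (det_al _ _)) ∈ GG K :=
  Subgroup.subset_closure (Or.inl ⟨x, X, rfl, rfl⟩)
theorem GG_be (x X : K) : (mkG (be x X) (det_be _ _), mkG (be (X^3) x) (det_be _ _)) ∈ GG K :=
  Subgroup.subset_closure (Or.inr (Or.inl ⟨x, X, rfl, rfl⟩))
theorem GG_ga (x X : K) : (mkG (ga x X) (det_ga _ _), mkG (ga (X^3) x) (det_ga _ _)) ∈ GG K :=
  Subgroup.subset_closure (Or.inr (Or.inr (Or.inl ⟨x, X, rfl, rfl⟩)))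
theorem T2_ne {y z : K} (hy : y ≠ 0) (hz : z ≠ 0) : y * z ^ 2 ≠ 0 ∧ y * z⁻¹ ≠ 0 :=
  ⟨mul_ne_zero hy (pow_ne_zero _ hz), mul_ne_zero hy (inv_ne_zero hz)⟩
theorem GG_Tm (y z : K) (hy : y ≠ 0) (hz : z ≠ 0) :
    (mkG (Tm y z) (det_Tm _ _ hy hz), mkG (Tm (y * z ^ 2) (y * z⁻¹))
      (det_Tm _ _ (T2_ne hy hz).1 (T2_ne hy hz).2)) ∈ GG K :=
  Subgroup.subset_closure (Or.inr (Or.inr (Or.inr (Or.inl ⟨y, z, hy, hz, rfl, rfl⟩))))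
theorem GG_ups : (mkG (ups : M7 K) det_ups, mkG (ups : M7 K) det_ups) ∈ GG K :=
  Subgroup.subset_closure (Or.inr (Or.inr (Or.inr (Or.inr ⟨rfl, rfl⟩))))

variable [CharP K 3]

theorem GG_prop {p : G7 K × G7 K} (hp : p ∈ GG K) :
    (Aut (p.1 : M7 K) ∧ Orth (p.1 : M7 K)) ∧ Inter (p.1 : M7 K) (p.2 : M7 K) ∧
      (p.1 : M7 K).det = 1 := by
  refine Subgroup.closure_induction (p := fun p _ => (Aut (p.1 : M7 K) ∧ Orth (p.1 : M7 K)) ∧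
    Inter (p.1 : M7 K) (p.2 : M7 K) ∧ (p.1 : M7 K).det = 1) ?_ ?_ ?_ ?_ hp
  · rintro ⟨a, b⟩ (⟨x, X, h1, h2⟩ | ⟨x, X, h1, h2⟩ | ⟨x, X, h1, h2⟩ | ⟨y, z, hy, hz, h1, h2⟩ |
      ⟨h1, h2⟩) <;> dsimp only at h1 h2 ⊢ <;> rw [h1, h2]
    · exact ⟨⟨al_aut _ _, al_orth _ _⟩, al_inter _ _, det_al _ _⟩
    · exact ⟨⟨be_aut _ _, be_orth _ _⟩, be_inter _ _, det_be _ _⟩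
    · exact ⟨⟨ga_aut _ _, ga_orth _ _⟩, ga_inter _ _, det_ga _ _⟩
    · exact ⟨⟨Tm_aut _ _ hy hz, Tm_orth _ _ hy hz⟩, Tm_inter _ _ hy hz, det_Tm _ _ hy hz⟩
    · exact ⟨⟨ups_aut, ups_orth⟩, ups_inter, det_ups⟩
  · exact ⟨⟨Aut.one, Orth.one⟩, Inter.one, Matrix.det_one⟩
  · rintro p q _ _ ⟨⟨a, b⟩, c, d⟩ ⟨⟨a', b'⟩, c', d'⟩
    refine ⟨⟨a.mul a', b.mul b'⟩, c.mul a c', ?_⟩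
    rw [Prod.fst_mul, Units.val_mul, Matrix.det_mul, d, d', one_mul]
  · rintro p _ ⟨⟨a, b⟩, c, d⟩
    refine ⟨⟨a.inv, b.inv⟩, c.inv a, ?_⟩
    have : ((p.1 * p.1⁻¹ : G7 K) : M7 K).det = 1 := by simp
    rw [Units.val_mul, Matrix.det_mul, d, one_mul] at this
    exact this

/-- entrywise ring hom on pairs -/
def mapG {R S : Type*} [Field R] [Field S] (f : R →+* S) : G7 R →* G7 S :=
  Matrix.GeneralLinearGroup.map f

theorem mapG_val {R S : Type*} [Field R] [Field S] (f : R →+* S) (x : G7 R) :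
    ((mapG f x : G7 S) : M7 S) = (x : M7 R).map f := rfl

theorem map_al {R S : Type*} [Field R] [Field S] (f : R →+* S) (x X : R) :
    (al x X).map f = al (f x) (f X) := by
  ext i j; fin_cases i <;> fin_cases j <;> simp [al]
theorem map_be {R S : Type*} [Field R] [Field S] (f : R →+* S) (x X : R) :
    (be x X).map f = be (f x) (f X) := by
  ext i j; fin_cases i <;> fin_cases j <;> simp [be]
theorem map_ga {R S : Type*} [Field R] [Field S] (f : R →+* S) (x X : R) :
    (ga x X).map f = ga (f x) (f X) := by
  ext i j; fin_cases i <;> fin_cases j <;> simp [ga]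
theorem map_ups {R S : Type*} [Field R] [Field S] (f : R →+* S)  :
    (ups : M7 R).map f = ups := by
  ext i j; fin_cases i <;> fin_cases j <;> simp [ups]
theorem map_Tm {R S : Type*} [Field R] [Field S] (f : R →+* S) (y z : R) :
    (Tm y z).map f = Tm (f y) (f z) := by
  rw [Tm, Tm, Matrix.diagonal_map (map_zero f)]
  congr 1
  ext i; fin_cases i <;> simp

theorem GG_map {R S : Type*} [Field R] [Field S] (f : R →+* S) {p : G7 R × G7 R}
    (hp : p ∈ GG R) : (mapG f p.1, mapG f p.2) ∈ GG S := by
  have : GG R ≤ (GG S).comap ((mapG f).prodMap (mapG f)) := by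
    rw [GG, Subgroup.closure_le]
    rintro ⟨a, b⟩ h
    apply Subgroup.subset_closure
    rcases h with (⟨x, X, h1, h2⟩ | ⟨x, X, h1, h2⟩ | ⟨x, X, h1, h2⟩ | ⟨y, z, hy, hz, h1, h2⟩ |
      ⟨h1, h2⟩) <;> dsimp only at h1 h2
    · refine Or.inl ⟨f x, f X, ?_, ?_⟩
      · exact (congrArg (fun A : M7 R => A.map f) h1).trans (map_al f _ _)
      · refine (congrArg (fun A : M7 R => A.map f) h2).trans ?_
        rw [← map_pow]; exact map_al f _ _
    · refine Or.inr (Or.inl ⟨f x, f X, ?_, ?_⟩)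
      · exact (congrArg (fun A : M7 R => A.map f) h1).trans (map_be f _ _)
      · refine (congrArg (fun A : M7 R => A.map f) h2).trans ?_
        rw [← map_pow]; exact map_be f _ _
    · refine Or.inr (Or.inr (Or.inl ⟨f x, f X, ?_, ?_⟩))
      · exact (congrArg (fun A : M7 R => A.map f) h1).trans (map_ga f _ _)
      · refine (congrArg (fun A : M7 R => A.map f) h2).trans ?_
        rw [← map_pow]; exact map_ga f _ _
    · refine Or.inr (Or.inr (Or.inr (Or.inl ⟨f y, f z, ?_, ?_, ?_, ?_⟩)))
      · simpa using hy
      · simpa using hz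
      · exact (congrArg (fun A : M7 R => A.map f) h1).trans (map_Tm f _ _)
      · refine (congrArg (fun A : M7 R => A.map f) h2).trans ?_
        rw [← map_pow, ← map_mul, ← map_inv₀, ← map_mul]; exact map_Tm f _ _
    · refine Or.inr (Or.inr (Or.inr (Or.inr ⟨?_, ?_⟩)))
      · exact (congrArg (fun A : M7 R => A.map f) h1).trans (map_ups f)
      · exact (congrArg (fun A : M7 R => A.map f) h2).trans (map_ups f)
  exact this hp

theorem GG_frob {p : G7 K × G7 K}
    (hp : p ∈ GG K) : (p.2, mapG (frobenius K 3) p.1) ∈ GG K := by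
  have : GG K ≤ (GG K).comap
      ((MonoidHom.snd _ _).prod ((mapG (frobenius K 3)).comp (MonoidHom.fst _ _))) := by
    rw [GG, Subgroup.closure_le]
    rintro ⟨a, b⟩ h
    apply Subgroup.subset_closure
    rcases h with (⟨x, X, h1, h2⟩ | ⟨x, X, h1, h2⟩ | ⟨x, X, h1, h2⟩ | ⟨y, z, hy, hz, h1, h2⟩ |
      ⟨h1, h2⟩) <;> dsimp only at h1 h2
    · refine Or.inl ⟨X^3, x, h2, ?_⟩
      exact (congrArg (fun A : M7 K => A.map (frobenius K 3)) h1).trans (map_al _ _ _)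
    · refine Or.inr (Or.inl ⟨X^3, x, h2, ?_⟩)
      exact (congrArg (fun A : M7 K => A.map (frobenius K 3)) h1).trans (map_be _ _ _)
    · refine Or.inr (Or.inr (Or.inl ⟨X^3, x, h2, ?_⟩))
      exact (congrArg (fun A : M7 K => A.map (frobenius K 3)) h1).trans (map_ga _ _ _)
    · refine Or.inr (Or.inr (Or.inr (Or.inl ⟨_, _, (T2_ne hy hz).1, (T2_ne hy hz).2, h2, ?_⟩)))
      refine (congrArg (fun A : M7 K => A.map (frobenius K 3)) h1).trans ?_
      rw [map_Tm]
      simp only [frobenius_def]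
      congr 1 <;> field_simp
    · refine Or.inr (Or.inr (Or.inr (Or.inr ⟨h2, ?_⟩)))
      exact (congrArg (fun A : M7 K => A.map (frobenius K 3)) h1).trans (map_ups _)
  exact this hp

theorem GG_unique {p q : G7 K × G7 K} (hp : p ∈ GG K) (hq : q ∈ GG K) (h : p.1 = q.1) :
    p.2 = q.2 := by
  have h1 := (GG_prop hp).2.1
  have h2 := (GG_prop hq).2.1
  rw [h] at h1
  exact Units.ext (h1.unique h2)

end group
end RX

namespace RX

section memb

/-- basis vectors -/
def ee {K : Type*} [Field K] (i : Fin 7) : Fin 7 → K := Pi.single i 1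

theorem mulVec_ee {K : Type*} [Field K] (x : M7 K) (i j : Fin 7) : (x *ᵥ ee j) i = x i j := by
  simp [ee]

theorem red_last {K : Type*} [Field K] (v s w : Fin 7 → K) (hs : ∀ i, s i = 0 ↔ v i = 0)
    (h : (DM s + ad w) * ad v = 0) (h6 : v 6 = 0) :
    v 1 = 0 ∧ v 2 = 0 ∧ v 3 = 0 ∧ v 4 = 0 ∧ v 5 = 0 := by
  have E : ∀ i j, ((DM s + ad w) * ad v) i j = 0 := fun i j => by rw [h]; rfl
  have s6 := (hs 6).2 h6
  have a1 := E 6 0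
  simp [mul7, DM, ad, h6, s6] at a1
  have h5 : v 5 = 0 := by
    have := hs 5
    grind
  have s5 := (hs 5).2 h5
  have h4 : v 4 = 0 := by
    have a1 := E 4 0
    have a2 := E 5 3
    simp [mul7, DM, ad, h6, s6, h5, s5] at a1 a2
    have := hs 4
    grind
  have s4 := (hs 4).2 h4
  have h3 : v 3 = 0 := by
    have a1 := E 0 0
    have a2 := E 1 0
    have a3 := E 1 1
    simp [mul7, DM, ad, h6, s6, h5, s5, h4, s4] at a1 a2 a3
    have := hs 3
    grind
  have s3 := (hs 3).2 h3
  have h2 : v 2 = 0 := by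
    have a1 := E 0 1
    have a2 := E 1 1
    have a3 := E 1 3
    simp [mul7, DM, ad, h6, s6, h5, s5, h4, s4, h3, s3] at a1 a2 a3
    have := hs 2
    grind
  have s2 := (hs 2).2 h2
  have h1 : v 1 = 0 := by
    have a1 := E 1 5
    have a2 := E 0 5
    have a3 := E 0 6
    simp [mul7, DM, ad, h6, s6, h5, s5, h4, s4, h3, s3, h2, s2] at a1 a2 a3
    have := hs 1
    grind
  exact ⟨h1, h2, h3, h4, h5⟩

theorem red_first {K : Type*} [Field K] (v s w : Fin 7 → K) (hs : ∀ i, s i = 0 ↔ v i = 0)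
    (h : (DM s + ad w) * ad v = 0) (h6 : v 6 ≠ 0) (h3 : v 3 = 0) (h4 : v 4 = 0) (h5 : v 5 = 0) :
    v 0 = 0 ∧ v 1 = 0 ∧ v 2 = 0 := by
  have E : ∀ i j, ((DM s + ad w) * ad v) i j = 0 := fun i j => by rw [h]; rfl
  have s6 : s 6 ≠ 0 := fun h => h6 ((hs 6).1 h)
  have s5 := (hs 5).2 h5
  have s4 := (hs 4).2 h4
  have s3 := (hs 3).2 h3
  have a1 := E 5 1
  have a2 := E 6 0
  have a3 := E 6 4
  have a4 := E 4 1
  have a5 := E 5 2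
  simp [mul7, DM, ad, h3, s3, h4, s4, h5, s5] at a1 a2 a3 a4 a5
  grind

/-- `x` is in the candidate group. -/
def Good {K : Type*} [Field K] (φ : K →+* K) (x : M7 K) : Prop :=
  (Aut x ∧ Orth x) ∧ Inter x (x.map φ)

theorem Good.mul {K : Type*} [Field K] {φ : K →+* K} {x y : M7 K} (hx : Good φ x)
    (hy : Good φ y) : Good φ (x * y) := by
  refine ⟨⟨hx.1.1.mul hy.1.1, hx.1.2.mul hy.1.2⟩, ?_⟩
  rw [Matrix.map_mul]
  exact hx.2.mul hx.1.1 hy.2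

theorem DM_ad_e0 {K : Type*} [Field K] : DM (ee 0 : Fin 7 → K) * ad (ee 0) = 0 := by
  ext i j
  rw [mul7]
  fin_cases i <;> fin_cases j <;> simp [DM, ad, ee]

theorem Good.eqn {K : Type*} [Field K] {φ : K →+* K} {x : G7 K} (hx : Good φ (x : M7 K)) :
    ∃ w, (DM (fun i => φ ((x : M7 K) i 0)) + ad w) * ad (fun i => (x : M7 K) i 0) = 0 := by
  obtain ⟨w, hw⟩ := hx.2 (ee 0)
  have e1 : (x : M7 K).map φ *ᵥ ee 0 = fun i => φ ((x : M7 K) i 0) := by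
    ext i; rw [mulVec_ee]; rfl
  have e2 : (x : M7 K) *ᵥ ee 0 = fun i => (x : M7 K) i 0 := by
    ext i; rw [mulVec_ee]
  refine ⟨w, ?_⟩
  rw [e1] at hw
  have h1 := hx.1.1 (ee 0)
  rw [e2] at h1
  apply (Units.mul_left_inj x).1
  rw [mul_assoc, ← h1, ← mul_assoc, ← hw, mul_assoc, DM_ad_e0, mul_zero, zero_mul]

/-- cross product compatibility -/
theorem Aut.cr {K : Type*} [Field K] {x : M7 K} (hx : Aut x) (u v : Fin 7 → K) :
    x *ᵥ (ad u *ᵥ v) = ad (x *ᵥ u) *ᵥ (x *ᵥ v) := by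
  rw [Matrix.mulVec_mulVec, hx, ← Matrix.mulVec_mulVec]

theorem eig_cr {K : Type*} [Field K] {x : M7 K} (hx : Aut x) {u v u' : Fin 7 → K} {a b : K}
    (hu : x *ᵥ u = a • u) (hv : x *ᵥ v = b • v) (h : ad u *ᵥ v = u') :
    x *ᵥ u' = (a * b) • u' := by
  rw [← h, hx.cr, hu, hv, ad_smul, Matrix.mulVec_smul, Matrix.smul_mulVec, smul_smul, mul_comm]

theorem cr12 {K : Type*} [Field K] : ad (ee 1 : Fin 7 → K) *ᵥ ee 2 = ee 0 := by
  ext i; rw [mulVec_ee]; fin_cases i <;> simp [ad, ee]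
theorem cr06 {K : Type*} [Field K] : ad (ee 0 : Fin 7 → K) *ᵥ ee 6 = ee 3 := by
  ext i; rw [mulVec_ee]; fin_cases i <;> simp [ad, ee]
theorem cr61 {K : Type*} [Field K] : ad (ee 6 : Fin 7 → K) *ᵥ ee 1 = ee 4 := by
  ext i; rw [mulVec_ee]; fin_cases i <;> simp [ad, ee]
theorem cr26 {K : Type*} [Field K] : ad (ee 2 : Fin 7 → K) *ᵥ ee 6 = ee 5 := by
  ext i; rw [mulVec_ee]; fin_cases i <;> simp [ad, ee]
theorem cr03 {K : Type*} [Field K] : ad (ee 0 : Fin 7 → K) *ᵥ ee 3 = ee 0 := by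
  ext i; rw [mulVec_ee]; fin_cases i <;> simp [ad, ee]

theorem ee_ne {K : Type*} [Field K] (i : Fin 7) : (ee i : Fin 7 → K) ≠ 0 := by
  intro h; have := congrFun h i; simp [ee] at this

/-- diagonal automorphisms are in the torus -/
theorem eq_Tm {K : Type*} [Field K] {x : M7 K} (hx : Aut x) {p s d : K}
    (h3 : x *ᵥ ee 3 = ee 3) (h1 : x *ᵥ ee 1 = p • ee 1) (h2 : x *ᵥ ee 2 = s • ee 2)
    (h6 : x *ᵥ ee 6 = d • ee 6) : p ≠ 0 ∧ s ≠ 0 ∧ x = Tm p s := by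
  have h0 := eig_cr hx h1 h2 cr12
  have h3' := eig_cr hx h0 h6 cr06
  have hd : p * s * d = 1 := by
    rw [h3] at h3'
    have := congrFun h3' 3
    simpa [ee] using this.symm
  have h4 := eig_cr hx h6 h1 cr61
  have h5 := eig_cr hx h2 h6 cr26
  have hp : p ≠ 0 := by rintro rfl; simp at hd
  have hs : s ≠ 0 := by rintro rfl; simp at hd
  refine ⟨hp, hs, ?_⟩
  have hd' : d = (p * s)⁻¹ := eq_inv_of_mul_eq_one_right hd
  ext i j
  rw [← mulVec_ee x i j]
  fin_cases j <;> simp only [Fin.zero_eta, Fin.mk_one, Fin.reduceFinMk] 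
  · rw [h0]; fin_cases i <;> simp [ee, Tm]
  · rw [h1]; fin_cases i <;> simp [ee, Tm]
  · rw [h2]; fin_cases i <;> simp [ee, Tm]
  · rw [h3]; fin_cases i <;> simp [ee, Tm]
  · rw [h4]; subst hd'; fin_cases i <;> simp [ee, Tm]; field_simp
  · rw [h5]; subst hd'; fin_cases i <;> simp [ee, Tm]; field_simp
  · rw [h6]; subst hd'; fin_cases i <;> simp [ee, Tm]

/-- the orthogonality relations in coordinates -/
theorem Orth.entry {K : Type*} [Field K] {x : M7 K} (hx : Orth x) (i j : Fin 7) :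
    x 0 i * x 6 j + x 1 i * x 5 j + x 2 i * x 4 j - x 3 i * x 3 j + x 4 i * x 2 j
      + x 5 i * x 1 j + x 6 i * x 0 j = (Jm : M7 K) i j := by
  have h : (xᵀ * Jm * x : M7 K) i j = (Jm : M7 K) i j := by
    rw [show xᵀ * Jm * x = Jm from hx]
  rw [← h]
  simp [mul7, Jm, Matrix.transpose_apply]
  ring

/-- an automorphism fixing `e3` preserves the grading -/
theorem comm_e3 {K : Type*} [Field K] {x : M7 K} (hx : Aut x) 
    (h3 : x *ᵥ ee 3 = ee 3) (i j : Fin 7) :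
    x i j * ![(-1 : K), 1, 1, 0, -1, -1, 1] j = ![(-1 : K), 1, 1, 0, -1, -1, 1] i * x i j := by
  have h : ad (ee 3 : Fin 7 → K) = Matrix.diagonal ![(-1 : K), 1, 1, 0, -1, -1, 1] := by
    ext i j
    fin_cases i <;> fin_cases j <;> simp [ad, ee]
  have := hx (ee 3)
  rw [h3, h] at this
  have := congrFun (congrFun this i) j
  rwa [Matrix.mul_diagonal, Matrix.diagonal_mul] at this

variable {F : Type*} [Field F]

/-- the torus lemma -/
theorem torus_lemma [CharP F 3] {φ : F →+* F} {x : G7 F} (hx : Good φ (x : M7 F)) {c d : F}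
    (h0 : (x : M7 F) *ᵥ ee 0 = c • ee 0) (h6 : (x : M7 F) *ᵥ ee 6 = d • ee 6) :
    ∃ p s : F, p ≠ 0 ∧ s ≠ 0 ∧ (x : M7 F) = Tm p s ∧ φ p = p * s ^ 2 ∧ φ s = p * s⁻¹ := by
  have h3 := eig_cr hx.1.1 h0 h6 cr06
  have hc : c ≠ 0 := by
    rintro rfl
    rw [zero_smul] at h0
    have : ((x⁻¹ * x : G7 F) : M7 F) *ᵥ ee 0 = 0 := by
      rw [Units.val_mul, ← Matrix.mulVec_mulVec, h0, Matrix.mulVec_zero]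
    rw [inv_mul_cancel, Units.val_one, Matrix.one_mulVec] at this
    exact ee_ne _ this
  have h0' := eig_cr hx.1.1 h0 h3 cr03
  have hcd : c * d = 1 := by
    rw [h0] at h0'
    have := congrFun h0' 0
    simp [ee] at this
    have h : c * 1 = c * (c * d) := by rw [mul_one]; exact this
    exact (mul_left_cancel₀ hc h).symm
  rw [hcd, one_smul] at h3
  have two : (2 : F) ≠ 0 := by
    intro h
    have h3 : (3 : F) = 0 := CharP.cast_eq_zero F 3
    exact one_ne_zero (α := F) (by linear_combination h3 - h)
  have C := comm_e3 hx.1.1 h3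
  have Z0 : ∀ i, (x : M7 F) i 0 = c * (ee 0 : Fin 7 → F) i := fun i => by
    rw [← mulVec_ee (x : M7 F), h0]; rfl
  have Z6 : ∀ i, (x : M7 F) i 6 = d * (ee 6 : Fin 7 → F) i := fun i => by
    rw [← mulVec_ee (x : M7 F), h6]; rfl
  have O1 := hx.1.2.entry 0 1
  have O2 := hx.1.2.entry 0 2
  simp [Z0, ee, Jm, hc] at O1 O2
  have hd : d ≠ 0 := by rintro rfl; simp at hcd
  obtain ⟨w, hw⟩ := hx.2 (ee 0)
  have a1 := congrFun (congrFun hw 2) 6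
  simp [mul7, DM, ad, mulVec_ee, Z0, Z6] at a1
  simp [ee] at a1
  obtain ⟨w, hw⟩ := hx.2 (ee 1)
  have x01 : (x : M7 F) 0 1 = 0 := by
    have := C 0 1; simp at this; grind
  have a2 := congrFun (congrFun hw 1) 6
  simp [mul7, DM, ad, mulVec_ee, Z0, Z6, x01] at a2
  simp [ee] at a2
  have x31 : (x : M7 F) 3 1 = 0 := by
    have := C 3 1; simp at this; grind
  have x41 : (x : M7 F) 4 1 = 0 := by
    have := C 4 1; simp at this; grind
  have x51 : (x : M7 F) 5 1 = 0 := by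
    have := C 5 1; simp at this; grind
  have x02 : (x : M7 F) 0 2 = 0 := by
    have := C 0 2; simp at this; grind
  have x32 : (x : M7 F) 3 2 = 0 := by
    have := C 3 2; simp at this; grind
  have x42 : (x : M7 F) 4 2 = 0 := by
    have := C 4 2; simp at this; grind
  have x52 : (x : M7 F) 5 2 = 0 := by
    have := C 5 2; simp at this; grind
  have h1 : (x : M7 F) *ᵥ ee 1 = ((x : M7 F) 1 1) • ee 1 := by
    ext i; rw [mulVec_ee]
    fin_cases i <;> simp [ee, x01, x31, x41, x51, a1, O1]
  have h2 : (x : M7 F) *ᵥ ee 2 = ((x : M7 F) 2 2) • ee 2 := by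
    ext i; rw [mulVec_ee]
    fin_cases i <;> simp [ee, x02, x32, x42, x52, a2, O2]
  obtain ⟨hp, hs, hT⟩ := eq_Tm hx.1.1 h3 h1 h2 h6
  refine ⟨_, _, hp, hs, hT, ?_⟩
  generalize (x : M7 F) 1 1 = p at *
  generalize (x : M7 F) 2 2 = s at *
  have i1 := Tm_inter p s hp hs
  have i2 := hx.2
  rw [← hT] at i1
  have := i2.unique i1
  rw [hT, map_Tm] at this
  have j1 := congrFun (congrFun this 1) 1
  have j2 := congrFun (congrFun this 2) 2
  simpa [Tm] using And.intro j1 j2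

end memb
end RX

namespace RX

section ree
variable {F : Type*} [Field F]

theorem amat_eq (t : ℕ) (x : F) : amat t x = al x (x^t) := by
  ext i j
  fin_cases i <;> fin_cases j <;> simp [amat, al] <;> ring

theorem bmat_eq (t : ℕ) (x : F) : bmat t x = be x (x^t) := by
  ext i j
  fin_cases i <;> fin_cases j <;> simp [bmat, be] <;> ring

theorem cmat_eq (t : ℕ) (x : F) : cmat t x = ga x (x^t) := by
  ext i j
  fin_cases i <;> fin_cases j <;> simp [cmat, ga] <;> ring

theorem hmat_eq (t : ℕ) (l : Fˣ) :
    hmat t l = Tm ((l : F) * ((l : F) ^ t)⁻¹) (((l : F) ^ t) ^ 2 * (l : F)⁻¹) := by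
  have hl : (l : F) ≠ 0 := l.ne_zero
  have e1 : (1 - (t : ℤ)) = 1 + -(t : ℤ) := by ring
  have e2 : (2 * (t : ℤ) - 1) = (t : ℤ) + (t : ℤ) + -1 := by ring
  have e3 : (1 - 2 * (t : ℤ)) = 1 + -(t : ℤ) + - (t : ℤ) := by ring
  have e4 : ((t : ℤ) - 1) = (t : ℤ) + -1 := by ring
  rw [hmat, Tm, e1, e2, e3, e4]
  congr 1
  ext i
  fin_cases i <;> simp [zpow_add₀ hl, _root_.zpow_neg] <;> field_simp

/-- hypotheses on `t` and the Frobenius power -/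
structure Twist (t : ℕ) (φ : F →+* F) : Prop where
  cube : ∀ x, φ x = (x ^ t) ^ 3
  root : ∀ x, φ (x ^ t) = x

theorem Twist.root' {t : ℕ} {φ : F →+* F} (h : Twist t φ) (x : F) : (φ x) ^ t = x := by
  rw [← map_pow, h.root]

theorem ree_GG {t : ℕ} {φ : F →+* F} (h : Twist t φ) {g : G7 F} (hg : g ∈ ReeGroup t) :
    (g, mapG φ g) ∈ GG F := by
  have : ReeGroup (F := F) t ≤ (GG F).comap ((MonoidHom.id _).prod (mapG φ)) := by
    rw [ReeGroup, Subgroup.closure_le]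
    intro g hg
    apply Subgroup.subset_closure
    rcases hg with (⟨x, h1⟩ | ⟨x, h1⟩ | ⟨x, h1⟩ | ⟨l, h1⟩ | h1)
    · rw [amat_eq] at h1
      refine Or.inl ⟨_, _, h1, ?_⟩
      refine (congrArg (fun A : M7 F => A.map φ) h1).trans ?_
      rw [map_al, h.root, h.cube]
    · rw [bmat_eq] at h1
      refine Or.inr (Or.inl ⟨_, _, h1, ?_⟩)
      refine (congrArg (fun A : M7 F => A.map φ) h1).trans ?_
      rw [map_be, h.root, h.cube]
    · rw [cmat_eq] at h1
      refine Or.inr (Or.inr (Or.inl ⟨_, _, h1, ?_⟩))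
      refine (congrArg (fun A : M7 F => A.map φ) h1).trans ?_
      rw [map_ga, h.root, h.cube]
    · rw [hmat_eq] at h1
      have hl : (l : F) ≠ 0 := l.ne_zero
      have hl' : (l : F) ^ t ≠ 0 := pow_ne_zero _ hl
      refine Or.inr (Or.inr (Or.inr (Or.inl ⟨_, _, ?_, ?_, h1, ?_⟩)))
      · positivity
      · positivity
      refine (congrArg (fun A : M7 F => A.map φ) h1).trans ?_
      rw [map_Tm]
      simp only [map_mul, map_inv₀, map_pow φ _ 2, h.root]
      rw [h.cube]
      congr 1 <;> field_simp
    · refine Or.inr (Or.inr (Or.inr (Or.inr ⟨h1, ?_⟩)))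
      exact (congrArg (fun A : M7 F => A.map φ) h1).trans (map_ups φ)
  exact this hg

theorem ree_good [CharP F 3] {t : ℕ} {φ : F →+* F} (h : Twist t φ) {g : G7 F}
    (hg : g ∈ ReeGroup t) : Good φ (g : M7 F) := by
  have := GG_prop (ree_GG h hg)
  exact ⟨this.1, this.2.1⟩

theorem ree_al (t : ℕ) (x : F) : mkG (al x (x^t)) (det_al _ _) ∈ ReeGroup (F := F) t :=
  Subgroup.subset_closure (Or.inl ⟨x, (amat_eq _ _).symm⟩)
theorem ree_be (t : ℕ) (x : F) : mkG (be x (x^t)) (det_be _ _) ∈ ReeGroup (F := F) t :=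
  Subgroup.subset_closure (Or.inr (Or.inl ⟨x, (bmat_eq _ _).symm⟩))
theorem ree_ga (t : ℕ) (x : F) : mkG (ga x (x^t)) (det_ga _ _) ∈ ReeGroup (F := F) t :=
  Subgroup.subset_closure (Or.inr (Or.inr (Or.inl ⟨x, (cmat_eq _ _).symm⟩)))
theorem ree_ups (t : ℕ) : mkG (ups : M7 F) det_ups ∈ ReeGroup (F := F) t :=
  Subgroup.subset_closure (Or.inr (Or.inr (Or.inr (Or.inr rfl))))
theorem ree_h (t : ℕ) (l : Fˣ) {g : G7 F} (h : (g : M7 F) = hmat t l) : g ∈ ReeGroup (F := F) t :=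
  Subgroup.subset_closure (Or.inr (Or.inr (Or.inr (Or.inl ⟨l, h⟩))))

theorem torus_ree [CharP F 3] {t : ℕ} {φ : F →+* F} (h : Twist t φ) {x : G7 F}
    (hx : Good φ (x : M7 F)) {c d : F}
    (h0 : (x : M7 F) *ᵥ ee 0 = c • ee 0) (h6 : (x : M7 F) *ᵥ ee 6 = d • ee 6) :
    ∃ l : Fˣ, (x : M7 F) = hmat t l := by
  obtain ⟨p, s, hp, hs, hT, h1, h2⟩ := torus_lemma hx h0 h6
  have hne : φ (p * s) ≠ 0 := by simp [hp, hs]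
  refine ⟨Units.mk0 _ hne, ?_⟩
  rw [hmat_eq, Units.val_mk0, h.root', map_mul, h1, h2, hT]
  congr 1 <;> field_simp

theorem unip_red [CharP F 3] {t : ℕ} {φ : F →+* F} (h : Twist t φ) {x : G7 F}
    (hx : Good φ (x : M7 F)) (h6 : (x : M7 F) 6 0 ≠ 0) :
    ∃ u ∈ ReeGroup (F := F) t, (u : M7 F) *ᵥ ee 0 = ee 0 ∧
      ∃ c : F, ((u * x : G7 F) : M7 F) *ᵥ ee 0 = c • ee 6 := by
  set v : Fin 7 → F := fun i => (x : M7 F) i 0 with hv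
  have hvx : (x : M7 F) *ᵥ ee 0 = v := by ext i; rw [mulVec_ee]
  have h6' : v 6 ≠ 0 := h6
  obtain ⟨a, ha⟩ : ∃ a, a ^ t = v 5 / v 6 := ⟨_, h.root' _⟩
  set v1 := al a (a^t) *ᵥ v with hv1
  obtain ⟨b, hb⟩ : ∃ b, b ^ t = - v1 4 / v 6 := ⟨_, h.root' _⟩
  set v2 := be b (b^t) *ᵥ v1 with hv2
  obtain ⟨c, hc⟩ : ∃ c, c ^ t = v2 3 / v 6 := ⟨_, h.root' _⟩
  set v3 := ga c (c^t) *ᵥ v2 with hv3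
  have a6 : v1 6 = v 6 := by rw [hv1, mulVec7]; simp [al]
  have a5 : v1 5 = 0 := by rw [hv1, mulVec7]; simp [al, ha]; field_simp; ring
  have b6 : v2 6 = v 6 := by rw [hv2, mulVec7]; simp [be, a6]
  have b5 : v2 5 = 0 := by rw [hv2, mulVec7]; simp [be, a5]
  have b4 : v2 4 = 0 := by rw [hv2, mulVec7]; simp [be, a6, hb]; field_simp; ring
  have c6 : v3 6 = v 6 := by rw [hv3, mulVec7]; simp [ga, b6]
  have c5 : v3 5 = 0 := by rw [hv3, mulVec7]; simp [ga, b5]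
  have c4 : v3 4 = 0 := by rw [hv3, mulVec7]; simp [ga, b4]
  have c3 : v3 3 = 0 := by rw [hv3, mulVec7]; simp [ga, b6, hc]; field_simp; ring
  set u : G7 F := mkG (ga c (c^t)) (det_ga _ _) * (mkG (be b (b^t)) (det_be _ _) *
    mkG (al a (a^t)) (det_al _ _)) with hu
  have hur : u ∈ ReeGroup (F := F) t :=
    mul_mem (ree_ga _ _) (mul_mem (ree_be _ _) (ree_al _ _))
  have hux : ((u * x : G7 F) : M7 F) *ᵥ ee 0 = v3 := by
    rw [Units.val_mul, ← Matrix.mulVec_mulVec, hvx, hu]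
    simp only [Units.val_mul, mkG_val, ← Matrix.mulVec_mulVec]
    rfl
  have hgood : Good φ ((u * x : G7 F) : M7 F) := by
    rw [Units.val_mul]; exact (ree_good h hur).mul hx
  obtain ⟨w, hw⟩ := hgood.eqn
  have hcol : (fun i => ((u * x : G7 F) : M7 F) i 0) = v3 := by
    rw [← hux]; ext i; rw [mulVec_ee]
  have hcol' : (fun i => φ (((u * x : G7 F) : M7 F) i 0)) = fun i => φ (v3 i) := by
    rw [← hcol]
  rw [hcol, hcol'] at hw
  obtain ⟨c0, c1, c2⟩ := red_first v3 _ w (fun i => by simp) hw (by rwa [c6]) c3 c4 c5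
  refine ⟨u, hur, ?_, v 6, ?_⟩
  · rw [hu]
    simp only [Units.val_mul, mkG_val, ← Matrix.mulVec_mulVec]
    have e1 : al a (a^t) *ᵥ ee 0 = ee 0 := by
      ext i; rw [mulVec_ee]; fin_cases i <;> simp [al, ee]
    have e2 : be b (b^t) *ᵥ ee 0 = ee 0 := by
      ext i; rw [mulVec_ee]; fin_cases i <;> simp [be, ee]
    have e3 : ga c (c^t) *ᵥ ee 0 = ee 0 := by
      ext i; rw [mulVec_ee]; fin_cases i <;> simp [ga, ee]
    rw [e1, e2, e3]
  · rw [hux]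
    ext i
    fin_cases i <;> simp [ee, c0, c1, c2, c3, c4, c5, c6]

theorem ups_e0 : (ups : M7 F) *ᵥ ee 0 = -ee 6 := by
  ext i; rw [mulVec_ee]; fin_cases i <;> simp [ups, ee]
theorem ups_e6 : (ups : M7 F) *ᵥ ee 6 = -ee 0 := by
  ext i; rw [mulVec_ee]; fin_cases i <;> simp [ups, ee]

theorem col_e0 [CharP F 3] {φ : F →+* F} {x : G7 F}
    (hx : Good φ (x : M7 F)) (h6 : (x : M7 F) 6 0 = 0) :
    (x : M7 F) *ᵥ ee 0 = (x : M7 F) 0 0 • ee 0 := by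
  obtain ⟨w, hw⟩ := hx.eqn
  obtain ⟨c1, c2, c3, c4, c5⟩ := red_last _ _ w (fun i => by simp) hw h6
  ext i
  rw [mulVec_ee]
  fin_cases i <;> simp [ee, h6, c1, c2, c3, c4, c5]

theorem good_ree [CharP F 3] {t : ℕ} {φ : F →+* F} (h : Twist t φ) {x : G7 F}
    (hx : Good φ (x : M7 F)) : x ∈ ReeGroup (F := F) t := by
  have key : ∀ (x : G7 F) (_ : Good φ (x : M7 F)) (c : F)
      (_ : (x : M7 F) *ᵥ ee 0 = c • ee 0), x ∈ ReeGroup (F := F) t := by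
    intro x hx c hc
    have Z0 : ∀ i, (x : M7 F) i 0 = c * (ee 0 : Fin 7 → F) i := fun i => by
      rw [← mulVec_ee (x : M7 F), hc]; rfl
    have O1 := hx.1.2.entry 0 6
    simp [Z0, ee, Jm] at O1
    have h66 : (x : M7 F) 6 6 ≠ 0 := by intro h; rw [h] at O1; simp at O1
    have hy : Good φ ((x * mkG ups det_ups : G7 F) : M7 F) := by
      rw [Units.val_mul]
      exact hx.mul (ree_good h (ree_ups t))
    have hye : ((x * mkG ups det_ups : G7 F) : M7 F) *ᵥ ee 0 = -((x : M7 F) *ᵥ ee 6) := by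
      rw [Units.val_mul, ← Matrix.mulVec_mulVec, mkG_val, ups_e0, Matrix.mulVec_neg]
    have hy6 : ((x * mkG ups det_ups : G7 F) : M7 F) 6 0 ≠ 0 := by
      rw [← mulVec_ee ((x * mkG ups det_ups : G7 F) : M7 F), hye, Pi.neg_apply, mulVec_ee]
      simpa using h66
    obtain ⟨u, hu, hu0, c', hc'⟩ := unip_red h hy hy6
    rw [Units.val_mul, ← Matrix.mulVec_mulVec, hye, Matrix.mulVec_neg] at hc'
    have f0 : ((u * x : G7 F) : M7 F) *ᵥ ee 0 = c • ee 0 := by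
      rw [Units.val_mul, ← Matrix.mulVec_mulVec, hc, Matrix.mulVec_smul, hu0]
    have f6 : ((u * x : G7 F) : M7 F) *ᵥ ee 6 = (-c') • ee 6 := by
      rw [Units.val_mul, ← Matrix.mulVec_mulVec, neg_smul, ← hc', neg_neg]
    have hg : Good φ ((u * x : G7 F) : M7 F) := by
      rw [Units.val_mul]; exact (ree_good h hu).mul hx
    obtain ⟨l, hl⟩ := torus_ree h hg f0 f6
    have := mul_mem (inv_mem hu) (ree_h t l hl)
    rwa [inv_mul_cancel_left] at this
  by_cases h6 : (x : M7 F) 6 0 = 0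
  · exact key x hx _ (col_e0 hx h6)
  · obtain ⟨u, hu, hu0, c, hc⟩ := unip_red h hx h6
    have hp : mkG ups det_ups * u ∈ ReeGroup (F := F) t := mul_mem (ree_ups t) hu
    have := key (mkG ups det_ups * u * x) (by
      rw [Units.val_mul]; exact (ree_good h hp).mul hx) (-c) (by
      rw [mul_assoc, Units.val_mul, ← Matrix.mulVec_mulVec, hc, Matrix.mulVec_smul, mkG_val,
        ups_e6, smul_neg, neg_smul])
    have := mul_mem (inv_mem hp) this
    rwa [inv_mul_cancel_left] at this

end ree
end RX

namespace RX

section inv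
variable {F : Type*} [Field F]

theorem Tm_mul (y z y' z' : F) : Tm y z * Tm y' z' = Tm (y * y') (z * z') := by
  rw [Tm, Tm, Tm, Matrix.diagonal_mul_diagonal]
  congr 1
  ext i
  fin_cases i <;> simp <;> ring

theorem Tm_one : Tm (1 : F) 1 = 1 := by
  rw [Tm, ← Matrix.diagonal_one]
  congr 1
  ext i
  fin_cases i <;> simp

theorem Tm_ups (y z : F) : Tm y z * ups = ups * Tm y⁻¹ z⁻¹ := by
  ext i j
  rw [Tm, Tm, Matrix.diagonal_mul, Matrix.mul_diagonal]
  fin_cases i <;> fin_cases j <;> simp [ups, mul_comm]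

theorem ups_ups : (ups : M7 F) * ups = 1 := by
  ext i j
  rw [mul7]
  fin_cases i <;> fin_cases j <;> simp [ups]

theorem Tm_lit : Tm (1 : F) (-1) = !![-1, 0, 0, 0, 0, 0, 0;
     0, 1, 0, 0, 0, 0, 0;
     0, 0, -1, 0, 0, 0, 0;
     0, 0, 0, 1, 0, 0, 0;
     0, 0, 0, 0, -1, 0, 0;
     0, 0, 0, 0, 0, 1, 0;
     0, 0, 0, 0, 0, 0, -1] := by
  ext i j
  fin_cases i <;> fin_cases j <;> simp [Tm, inv_neg]

theorem word1 [CharP F 3] : al (1 : F) 1 * ups * al (-1) (-1) * Tm 1 (-1) =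
    ups * (al (1 : F) 1 * ups * al (-1) (-1)) := by
  have h3 : (3:F) = 0 := CharP.cast_eq_zero F 3
  rw [al, al, Tm_lit, ups, lit_mul]
  simp only [mul_zero, zero_mul, add_zero, zero_add, mul_one, one_mul, neg_zero, one_pow]
  rw [lit_mul]
  simp only [mul_zero, zero_mul, add_zero, zero_add, mul_one, one_mul, neg_zero, one_pow]
  rw [lit_mul, lit_mul]
  apply lit_eq <;> (ring_nf; try grind)

theorem word2 [CharP F 3] : al (1 : F) 1 * ga (-1) (-1) * ups * ga 1 1 * Tm 1 (-1) =
    ups * Tm 1 (-1) * (al (1 : F) 1 * ga (-1) (-1) * ups * ga 1 1) := by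
  have h3 : (3:F) = 0 := CharP.cast_eq_zero F 3
  rw [al, ga, ga, Tm_lit, ups, lit_mul]
  simp only [mul_zero, zero_mul, add_zero, zero_add, mul_one, one_mul, neg_zero, one_pow]
  rw [lit_mul]
  simp only [mul_zero, zero_mul, add_zero, zero_add, mul_one, one_mul, neg_zero, one_pow]
  rw [lit_mul, lit_mul, lit_mul, lit_mul]
  simp only [mul_zero, zero_mul, add_zero, zero_add, mul_one, one_mul, neg_zero, one_pow]
  apply lit_eq <;> (ring_nf; try grind)

theorem hmat_comm {t : ℕ} {l e m : Fˣ} (he : e * e = 1) (het : (e : F) ^ t = e)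
    (hl : l = e * m ^ 2) :
    hmat t m * (ups * hmat t l) = ups * Tm 1 (e : F) * hmat t m := by
  have h0 : (m : F) ≠ 0 := m.ne_zero
  have h1 : (e : F) ≠ 0 := e.ne_zero
  have h2 : (e : F) * e = 1 := by rw [← Units.val_mul, he, Units.val_one]
  rw [hmat_eq, hmat_eq, ← mul_assoc, Tm_ups, mul_assoc, mul_assoc, Tm_mul, Tm_mul, hl]
  have h3 : (m : F) ^ t ≠ 0 := pow_ne_zero _ h0
  congr 2
  · push_cast
    rw [mul_pow, het, show ((m : F) ^ 2) ^ t = ((m : F) ^ t) ^ 2 by ring]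
    field_simp
  · push_cast
    rw [mul_pow, het, show ((m : F) ^ 2) ^ t = ((m : F) ^ t) ^ 2 by ring]
    field_simp

theorem involution [CharP F 3] {t : ℕ} {φ : F →+* F} (h : Twist t φ) (ht : Odd t)
    (hsq : ∀ l : Fˣ, ∃ m : Fˣ, l = m ^ 2 ∨ l = - m ^ 2) {g : G7 F}
    (hg : g ∈ ReeGroup (F := F) t) (h2 : g * g = 1) (hne : g ≠ 1) :
    ∃ x ∈ ReeGroup (F := F) t, (g : M7 F) * (x : M7 F) = (x : M7 F) * Tm 1 (-1) := by
  -- main case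
  have key : ∀ g ∈ ReeGroup (F := F) t, g * g = 1 → (g : M7 F) 6 0 ≠ 0 →
      ∃ x ∈ ReeGroup (F := F) t, (g : M7 F) * (x : M7 F) = (x : M7 F) * Tm 1 (-1) := by
    intro g hg h2 h6
    obtain ⟨u, hu, hu0, c, hc⟩ := unip_red h (ree_good h hg) h6
    have hu0' : ((u⁻¹ : G7 F) : M7 F) *ᵥ ee 0 = ee 0 := by
      conv_lhs => rw [← hu0]
      rw [Matrix.mulVec_mulVec, ← Units.val_mul, inv_mul_cancel, Units.val_one,
        Matrix.one_mulVec]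
    set g' := u * g * u⁻¹ with hg'
    have hg'm : g' ∈ ReeGroup (F := F) t := mul_mem (mul_mem hu hg) (inv_mem hu)
    have hg'2 : g' * g' = 1 := by
      rw [hg']
      have : u * g * u⁻¹ * (u * g * u⁻¹) = u * (g * g) * u⁻¹ := by group
      rw [this, h2]; group
    have e0 : (g' : M7 F) *ᵥ ee 0 = c • ee 6 := by
      rw [hg', Units.val_mul, ← Matrix.mulVec_mulVec, hu0', hc]
    have e6c : c • ((g' : M7 F) *ᵥ ee 6) = ee 0 := by
      rw [← Matrix.mulVec_smul, ← e0, Matrix.mulVec_mulVec, ← Units.val_mul, hg'2,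
        Units.val_one, Matrix.one_mulVec]
    have hcne : c ≠ 0 := by
      rintro rfl
      rw [zero_smul] at e6c
      exact ee_ne 0 e6c.symm
    have e6 : (g' : M7 F) *ᵥ ee 6 = c⁻¹ • ee 0 := by
      rw [← e6c, smul_smul, inv_mul_cancel₀ hcne, one_smul]
    have hy : mkG ups det_ups * g' ∈ ReeGroup (F := F) t := mul_mem (ree_ups t) hg'm
    obtain ⟨l, hl⟩ := torus_ree h (ree_good h hy) (c := -c) (d := -c⁻¹)
      (by rw [Units.val_mul, ← Matrix.mulVec_mulVec, e0, Matrix.mulVec_smul, mkG_val, ups_e6]; simp)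
      (by rw [Units.val_mul, ← Matrix.mulVec_mulVec, e6, Matrix.mulVec_smul, mkG_val, ups_e0]; simp)
    have hgl : (g' : M7 F) = ups * hmat t l := by
      rw [← hl, Units.val_mul (mkG ups det_ups), mkG_val, ← mul_assoc, ups_ups, one_mul]
    -- conjugate to ups * Tm 1 e
    have step : ∃ e : F, (e = 1 ∨ e = -1) ∧ ∃ x ∈ ReeGroup (F := F) t,
        (x : M7 F) * (g' : M7 F) = ups * Tm 1 e * (x : M7 F) := by
      obtain ⟨m, hm⟩ := hsq l
      have hdet : (hmat t m).det = 1 := by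
        rw [hmat_eq]
        apply det_Tm
        · exact mul_ne_zero m.ne_zero (inv_ne_zero (pow_ne_zero _ m.ne_zero))
        · exact mul_ne_zero (pow_ne_zero _ (pow_ne_zero _ m.ne_zero)) (inv_ne_zero m.ne_zero)
      rcases hm with hm | hm
      · refine ⟨((1 : Fˣ) : F), Or.inl rfl, mkG (hmat t m) hdet, ree_h t m rfl, ?_⟩
        rw [mkG_val, hgl]
        exact hmat_comm (by simp) (by simp) (by simpa using hm)
      · refine ⟨((-1 : Fˣ) : F), Or.inr (by simp), mkG (hmat t m) hdet, ree_h t m rfl, ?_⟩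
        rw [mkG_val, hgl]
        exact hmat_comm (by simp) (by simp [ht.neg_one_pow]) (by simpa using hm)
    have step2 : ∀ e : F, (e = 1 ∨ e = -1) → ∃ x ∈ ReeGroup (F := F) t,
        (x : M7 F) * Tm 1 (-1) = ups * Tm 1 e * (x : M7 F) := by
      have a1 := ree_al t (1 : F)
      have a2 := ree_al t (-1 : F)
      have g1 := ree_ga t (1 : F)
      have g2 := ree_ga t (-1 : F)
      rintro e (rfl | rfl)
      · refine ⟨_, mul_mem (mul_mem a1 (ree_ups t)) a2, ?_⟩
        simp only [Units.val_mul, mkG_val, one_pow, ht.neg_one_pow]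
        rw [word1, Tm_one, mul_one]
      · refine ⟨_, mul_mem (mul_mem (mul_mem a1 g2) (ree_ups t)) g1, ?_⟩
        simp only [Units.val_mul, mkG_val, one_pow, ht.neg_one_pow]
        exact word2
    obtain ⟨e, he, x, hx, hx1⟩ := step
    obtain ⟨y, hy, hy1⟩ := step2 e he
    refine ⟨u⁻¹ * x⁻¹ * y, mul_mem (mul_mem (inv_mem hu) (inv_mem hx)) hy, ?_⟩
    have hgg : g = u⁻¹ * g' * u := by rw [hg']; group
    have hx2 : (g' : M7 F) * ((x⁻¹ : G7 F) : M7 F) = ((x⁻¹ : G7 F) : M7 F) * (ups * Tm 1 e) := by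
      have : ((x⁻¹ : G7 F) : M7 F) * ((x : M7 F) * (g' : M7 F)) * ((x⁻¹ : G7 F) : M7 F) =
        ((x⁻¹ : G7 F) : M7 F) * (ups * Tm 1 e * (x : M7 F)) * ((x⁻¹ : G7 F) : M7 F) := by rw [hx1]
      simpa [mul_assoc] using this
    calc (g : M7 F) * ((u⁻¹ * x⁻¹ * y : G7 F) : M7 F)
        = ((g * (u⁻¹ * x⁻¹ * y) : G7 F) : M7 F) := (Units.val_mul _ _).symm
      _ = ((u⁻¹ * (g' * x⁻¹) * y : G7 F) : M7 F) := by
          congr 1; rw [hgg]; group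
      _ = ((u⁻¹ : G7 F) : M7 F) * ((g' : M7 F) * ((x⁻¹ : G7 F) : M7 F)) * (y : M7 F) := by
          simp only [Units.val_mul]
      _ = ((u⁻¹ : G7 F) : M7 F) * ((x⁻¹ : G7 F) : M7 F) * (ups * Tm 1 e * (y : M7 F)) := by
          rw [hx2]; simp only [mul_assoc]
      _ = _ := by rw [← hy1]; simp only [Units.val_mul, mul_assoc]
  by_cases h60 : (g : M7 F) 6 0 = 0
  swap
  · exact key g hg h2 h60
  set U : G7 F := mkG ups det_ups with hU
  have hUm : U ∈ ReeGroup (F := F) t := ree_ups t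
  have hUU : U * U = 1 := by ext1; rw [Units.val_mul, hU, mkG_val, ups_ups, Units.val_one]
  have c0 := col_e0 (ree_good h hg) h60
  set g' := U * g * U with hg'
  have hg'm : g' ∈ ReeGroup (F := F) t := mul_mem (mul_mem hUm hg) hUm
  have hg'2 : g' * g' = 1 := by
    rw [hg']
    calc U * g * U * (U * g * U) = U * g * (U * U) * g * U := by group
      _ = U * (g * g) * U := by rw [hUU]; group
      _ = 1 := by rw [h2, mul_one, hUU]
  by_cases h60' : (g' : M7 F) 6 0 = 0
  · have c1 := col_e0 (ree_good h hg'm) h60'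
    have c6 : (g : M7 F) *ᵥ ee 6 = (g' : M7 F) 0 0 • ee 6 := by
      have hgg : g = U * g' * U := by
        rw [hg']
        calc g = (U * U) * g * (U * U) := by rw [hUU]; simp
          _ = _ := by group
      conv_lhs => rw [hgg]
      rw [Units.val_mul, Units.val_mul, ← Matrix.mulVec_mulVec, ← Matrix.mulVec_mulVec, hU,
        mkG_val, ups_e6, Matrix.mulVec_neg, c1, Matrix.mulVec_neg, Matrix.mulVec_smul, ups_e0]
      simp
    obtain ⟨l, hl⟩ := torus_ree h (ree_good h hg) c0 c6
    have hlne : (l : F) ≠ 0 := l.ne_zero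
    have hz : ((l : F) ^ t) * ((l : F) ^ t) = 1 := by
      have := congrArg (fun x : G7 F => (x : M7 F) 0 0) h2
      simp only [Units.val_mul, Units.val_one] at this
      rw [hl, hmat_eq, Tm_mul] at this
      simp [Tm] at this
      field_simp at this
      rw [sq] at this; exact this
    have hl1 : (l : F) = 1 ∨ (l : F) = -1 := by
      have := congrArg φ hz
      rw [map_mul, h.root, map_one] at this
      exact mul_self_eq_one_iff.1 this
    refine ⟨1, one_mem _, ?_⟩
    rw [Units.val_one, mul_one, one_mul, hl, hmat_eq]
    rcases hl1 with hl1 | hl1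
    · exfalso; apply hne; ext1
      rw [hl, hmat_eq, hl1]; simp [Tm_one]
    · rw [hl1, ht.neg_one_pow]; norm_num
  · obtain ⟨x, hx, hx1⟩ := key g' hg'm hg'2 h60'
    refine ⟨U * x, mul_mem hUm hx, ?_⟩
    have hgg : g * U = U * g' := by
      rw [hg']
      calc g * U = (U * U) * g * U := by rw [hUU]; simp
          _ = _ := by group
    calc (g : M7 F) * ((U * x : G7 F) : M7 F) = ((g * U : G7 F) : M7 F) * (x : M7 F) := by
          simp only [Units.val_mul, mul_assoc]
      _ = _ := by rw [hgg]; simp only [Units.val_mul, mul_assoc, hx1]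

end inv
end RX

namespace RX

section diagz
variable {K : Type*} [Field K]

/-- finite order prime to the characteristic implies diagonalizable, with a base change in `SL₃` -/
theorem diag3 [IsAlgClosed K] (N : Matrix (Fin 3) (Fin 3) K) (n : ℕ) (hn : (n : K) ≠ 0)
    (hN : N ^ n = 1) :
    ∃ (Y : Matrix (Fin 3) (Fin 3) K) (D : Fin 3 → K), Y.det = 1 ∧
      N * Y = Y * Matrix.diagonal D := by
  set f := Matrix.toLin' N with hf
  have hss : Module.End.IsSemisimple f := by
    apply Module.End.isSemisimple_of_squarefree_aeval_eq_zero (p := Polynomial.X ^ n - 1)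
    · exact (Polynomial.X_pow_sub_one_separable_iff.2 hn).squarefree
    · simp only [map_sub, map_pow, Polynomial.aeval_X, map_one]
      rw [hf, ← Matrix.toLin'_pow, hN, Matrix.toLin'_one, sub_eq_zero]; rfl
  have htop := hss.iSup_eigenspace_eq_top
  set s : Set (Fin 3 → K) := {v | ∃ μ : K, N *ᵥ v = μ • v} with hs
  have hspan : ⊤ ≤ Submodule.span K s := by
    rw [← htop]
    refine iSup_le fun μ v hv => Submodule.subset_span ⟨μ, ?_⟩
    simpa [hf] using Module.End.mem_eigenspace_iff.1 hv
  let b0 := Module.Basis.ofSpan hspan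
  let b := b0.reindex (b0.indexEquiv (Pi.basisFun K (Fin 3)))
  have hb : ∀ j, ∃ μ : K, N *ᵥ (b j) = μ • b j := by
    intro j
    have : b j ∈ s := by
      apply Module.Basis.ofSpan_subset hspan
      simp only [b, Module.Basis.reindex_apply]
      exact Set.mem_range_self _
    exact this
  choose D hD using hb
  let Y0 : Matrix (Fin 3) (Fin 3) K := Matrix.of fun i j => b j i
  have hY0 : Y0.det ≠ 0 := by
    have h1 : Y0 = (Pi.basisFun K (Fin 3)).toMatrix b := by
      ext i j; simp [Y0, Module.Basis.toMatrix_apply]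
    rw [h1]
    have := Module.Basis.isUnit_det (Pi.basisFun K (Fin 3)) b
    rw [Module.Basis.det_apply] at this
    exact this.ne_zero
  have hNY : N * Y0 = Y0 * Matrix.diagonal D := by
    ext i j
    rw [Matrix.mul_diagonal]
    have := congrFun (hD j) i
    simp only [Matrix.mulVec, dotProduct, Pi.smul_apply, smul_eq_mul] at this
    rw [Matrix.mul_apply, mul_comm]
    exact this
  refine ⟨Y0 * Matrix.diagonal ![Y0.det⁻¹, 1, 1], D, ?_, ?_⟩
  · rw [Matrix.det_mul, Matrix.det_diagonal]
    simp [Fin.prod_univ_three, hY0]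
  · rw [← mul_assoc, hNY, mul_assoc, mul_assoc, Matrix.diagonal_mul_diagonal,
      Matrix.diagonal_mul_diagonal]
    congr 2; ext i; ring

/-- positions of the three dimensional eigenspace -/
def f3 : Fin 3 → Fin 7 := ![1, 2, 6]

/-- `x` acts by `N` on the three dimensional eigenspace -/
def Act3 (x : M7 K) (N : Matrix (Fin 3) (Fin 3) K) : Prop :=
  ∀ j, x *ᵥ ee (f3 j) = N 0 j • ee 1 + N 1 j • ee 2 + N 2 j • ee 6

theorem Act3.mul {x y : M7 K} {N P : Matrix (Fin 3) (Fin 3) K} (hx : Act3 x N) (hy : Act3 y P) :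
    Act3 (x * y) (N * P) := by
  intro j
  have h0 := hx 0
  have h1 := hx 1
  have h2 := hx 2
  rw [show f3 0 = 1 from rfl] at h0
  rw [show f3 1 = 2 from rfl] at h1
  rw [show f3 2 = 6 from rfl] at h2
  rw [← Matrix.mulVec_mulVec, hy j, Matrix.mulVec_add, Matrix.mulVec_add, Matrix.mulVec_smul,
    Matrix.mulVec_smul, Matrix.mulVec_smul, h0, h1, h2]
  simp only [Matrix.mul_apply, Fin.sum_univ_three]
  module

theorem Act3.one : Act3 (1 : M7 K) 1 := by
  intro j
  rw [Matrix.one_mulVec]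
  fin_cases j
  · change (ee 1 : Fin 7 → K) = _; simp [Matrix.one_apply]
  · change (ee 2 : Fin 7 → K) = _; simp [Matrix.one_apply]
  · change (ee 6 : Fin 7 → K) = _; simp [Matrix.one_apply]

theorem Act3.unique {x : M7 K} {N P : Matrix (Fin 3) (Fin 3) K} (hx : Act3 x N) (hy : Act3 x P) :
    N = P := by
  ext i j
  have h := (hx j).symm.trans (hy j)
  fin_cases i
  · have := congrFun h 1; simpa [ee] using this
  · have := congrFun h 2; simpa [ee] using this
  · have := congrFun h 6; simpa [ee] using this

theorem Act3.pow {x : M7 K} {N : Matrix (Fin 3) (Fin 3) K} (hx : Act3 x N) (n : ℕ) :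
    Act3 (x ^ n) (N ^ n) := by
  induction n with
  | zero => simpa using Act3.one
  | succ n ih => rw [pow_succ, pow_succ]; exact ih.mul hx

theorem act3_fix [CharP K 3] {x : M7 K} (hx : Aut x) (h3 : x *ᵥ ee 3 = ee 3) :
    Act3 x (x.submatrix f3 f3) := by
  have h3' : (3 : K) = 0 := CharP.cast_eq_zero K 3
  have h2 : (2 : K) = -1 := by grind
  have hc := comm_e3 hx h3
  intro j
  have hz : ∀ i, (i = 0 ∨ i = 3 ∨ i = 4 ∨ i = 5) → x i (f3 j) = 0 := by
    intro i hi
    have := hc i (f3 j)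
    fin_cases j <;> rcases hi with rfl | rfl | rfl | rfl <;> simp [f3] at this ⊢ <;> grind
  have z0 := hz 0 (by simp)
  have z3 := hz 3 (by simp)
  have z4 := hz 4 (by simp)
  have z5 := hz 5 (by simp)
  ext i
  rw [mulVec_ee]
  fin_cases i <;> simp [ee, f3] <;> assumption

variable [CharP K 3]

theorem emb_of {p : G7 K × G7 K} (hp : p ∈ GG K) (h3 : ∀ i, (p.1 : M7 K) i 3 = ee 3 i)
    {Y : Matrix (Fin 3) (Fin 3) K} (h : (p.1 : M7 K).submatrix f3 f3 = Y) :
    ∃ p ∈ GG K, (p.1 : M7 K) *ᵥ ee 3 = ee 3 ∧ Act3 (p.1 : M7 K) Y := by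
  have h3' : (p.1 : M7 K) *ᵥ ee 3 = ee 3 := by ext i; rw [mulVec_ee, h3]
  refine ⟨p, hp, h3', ?_⟩
  rw [← h]
  exact act3_fix (GG_prop hp).1.1 h3'

theorem flip_entry (A : M7 K) (i j : Fin 7) : (ups * A * ups : M7 K) i j = A (Fin.rev i) (Fin.rev j) := by
  have h : (ups : M7 K) = Matrix.of fun i j => if i = Fin.rev j then -1 else 0 := by
    ext i j; fin_cases i <;> fin_cases j <;> simp [ups, Fin.rev, Fin.ext_iff]
  have h1 : ∀ B : M7 K, ∀ i j, (ups * B : M7 K) i j = - B (Fin.rev i) j := by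
    intro B i j
    rw [h, Matrix.mul_apply, Finset.sum_eq_single (Fin.rev i)]
    · simp
    · intro k _ hk
      have : i ≠ Fin.rev k := fun h => hk (by rw [h, Fin.rev_rev])
      simp [this]
    · simp
  have h2 : ∀ B : M7 K, ∀ i j, (B * ups : M7 K) i j = - B i (Fin.rev j) := by
    intro B i j
    rw [h, Matrix.mul_apply, Finset.sum_eq_single (Fin.rev j)]
    · simp
    · intro k _ hk
      simp [hk]
    · simp
  rw [h2, h1, neg_neg]

theorem sub3 (A : M7 K) : A.submatrix f3 f3 =
    !![A 1 1, A 1 2, A 1 6; A 2 1, A 2 2, A 2 6; A 6 1, A 6 2, A 6 6] := by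
  ext i j; fin_cases i <;> fin_cases j <;> rfl

theorem emb_flip {A B : M7 K} {hA : A.det = 1} {hB : B.det = 1} (hp : (mkG A hA, mkG B hB) ∈ GG K)
    (h3 : ∀ i, A i 3 = ee 3 i) {Y : Matrix (Fin 3) (Fin 3) K}
    (h : !![A 5 5, A 5 4, A 5 0; A 4 5, A 4 4, A 4 0; A 0 5, A 0 4, A 0 0] = Y) :
    ∃ p ∈ GG K, (p.1 : M7 K) *ᵥ ee 3 = ee 3 ∧ Act3 (p.1 : M7 K) Y := by
  refine emb_of (mul_mem (mul_mem GG_ups hp) GG_ups) ?_ ?_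
  · intro i
    simp only [Prod.fst_mul, Units.val_mul, mkG_val, flip_entry]
    rw [show Fin.rev (3 : Fin 7) = 3 from rfl, h3]
    fin_cases i <;> simp [ee, Fin.rev]
  · simp only [Prod.fst_mul, Units.val_mul, mkG_val]
    rw [sub3, ← h]
    simp only [flip_entry]
    rfl

theorem tv (i j : Fin 3) (hij : i ≠ j) (c : K) :
    (Matrix.TransvectionStruct.toMatrix ⟨i, j, hij, c⟩) = 1 + Matrix.single i j c := rfl

theorem sl3_tv (i j : Fin 3) (hij : i ≠ j) (c : K) :
    ∃ p ∈ GG K, (p.1 : M7 K) *ᵥ ee 3 = ee 3 ∧ Act3 (p.1 : M7 K) (1 + Matrix.single i j c) := by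
  have a3 : ∀ x : K, ∀ i, al x 0 i 3 = ee 3 i := fun x i => by
    fin_cases i <;> simp [al, ee]
  have b3 : ∀ x : K, ∀ i, be x 0 i 3 = ee 3 i := fun x i => by
    fin_cases i <;> simp [be, ee]
  have g3 : ∀ x : K, ∀ i, ga x 0 i 3 = ee 3 i := fun x i => by
    fin_cases i <;> simp [ga, ee]
  have hm : ∀ i j : Fin 3, (1 + Matrix.single i j c : Matrix (Fin 3) (Fin 3) K) =
      Matrix.of fun k l => (if k = l then 1 else 0) + (if i = k ∧ j = l then c else 0) := by
    intro i j; ext k l; simp [Matrix.one_apply, Matrix.single]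
  rw [hm]
  have hcase : (i = 0 ∧ j = 1) ∨ (i = 0 ∧ j = 2) ∨ (i = 1 ∧ j = 2) ∨ (i = 1 ∧ j = 0) ∨
      (i = 2 ∧ j = 0) ∨ (i = 2 ∧ j = 1) := by
    revert i j; decide
  rcases hcase with ⟨rfl, rfl⟩ | ⟨rfl, rfl⟩ | ⟨rfl, rfl⟩ | ⟨rfl, rfl⟩ | ⟨rfl, rfl⟩ | ⟨rfl, rfl⟩
  · apply emb_of (GG_al c 0) (a3 c)
    rw [mkG_val, sub3]; ext i j; fin_cases i <;> fin_cases j <;> simp [al]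
  · apply emb_of (GG_ga c 0) (g3 c)
    rw [mkG_val, sub3]; ext i j; fin_cases i <;> fin_cases j <;> simp [ga]
  · apply emb_of (GG_be c 0) (b3 c)
    rw [mkG_val, sub3]; ext i j; fin_cases i <;> fin_cases j <;> simp [be]
  · apply emb_flip (GG_al (-c) 0) (a3 (-c))
    ext i j; fin_cases i <;> fin_cases j <;> simp [al]
  · apply emb_flip (GG_ga (-c) 0) (g3 (-c))
    ext i j; fin_cases i <;> fin_cases j <;> simp [ga]
  · apply emb_flip (GG_be (-c) 0) (b3 (-c))
    ext i j; fin_cases i <;> fin_cases j <;> simp [be]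

theorem sl3_diag (D : Fin 3 → K) (hD : D 0 * D 1 * D 2 = 1) :
    ∃ p ∈ GG K, (p.1 : M7 K) *ᵥ ee 3 = ee 3 ∧ Act3 (p.1 : M7 K) (Matrix.diagonal D) := by
  have h0 : D 0 ≠ 0 := by intro h; simp [h] at hD
  have h1 : D 1 ≠ 0 := by intro h; simp [h] at hD
  have h2 : (D 0 * D 1)⁻¹ = D 2 := inv_eq_of_mul_eq_one_right hD
  apply emb_of (GG_Tm (D 0) (D 1) h0 h1)
  · intro i; rw [mkG_val]; fin_cases i <;> simp [Tm, ee]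
  · rw [mkG_val, sub3, Tm, h2]
    ext i j; fin_cases i <;> fin_cases j <;> simp [Matrix.diagonal]

/-- the group contains `SL₃` -/
theorem sl3 (Y : Matrix (Fin 3) (Fin 3) K) (hY : Y.det = 1) :
    ∃ p ∈ GG K, (p.1 : M7 K) *ᵥ ee 3 = ee 3 ∧ Act3 (p.1 : M7 K) Y := by
  refine Matrix.diagonal_transvection_induction
    (P := fun Y => ∃ p ∈ GG K, (p.1 : M7 K) *ᵥ ee 3 = ee 3 ∧ Act3 (p.1 : M7 K) Y) Y ?_ ?_ ?_
  · intro D hD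
    rw [hY, Matrix.det_diagonal, Fin.prod_univ_three] at hD
    exact sl3_diag D hD
  · rintro ⟨i, j, hij, c⟩
    rw [tv]
    exact sl3_tv i j hij c
  · rintro A B ⟨p, hp, p3, pA⟩ ⟨q, hq, q3, qB⟩
    refine ⟨p * q, mul_mem hp hq, ?_, ?_⟩
    · rw [Prod.fst_mul, Units.val_mul, ← Matrix.mulVec_mulVec, q3, p3]
    · rw [Prod.fst_mul, Units.val_mul]; exact pA.mul qB

end diagz
end RX

namespace RX

section fixv
variable {K : Type*} [Field K]

/-- the invariant symmetric bilinear form -/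
def BF (u v : Fin 7 → K) : K := u ⬝ᵥ (Jm *ᵥ v)

theorem BF_eq (u v : Fin 7 → K) : BF u v = u 0 * v 6 + u 1 * v 5 + u 2 * v 4 - u 3 * v 3
    + u 4 * v 2 + u 5 * v 1 + u 6 * v 0 := by
  simp [BF, dotProduct, mulVec7, Fin.sum_univ_seven, Jm]
  ring

theorem BF_inv {x : M7 K} (hx : Orth x) (u v : Fin 7 → K) : BF (x *ᵥ u) (x *ᵥ v) = BF u v := by
  unfold BF
  conv_rhs => rw [← show xᵀ * Jm * x = Jm from hx]
  rw [Matrix.dotProduct_mulVec, Matrix.dotProduct_mulVec, Matrix.dotProduct_mulVec,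
    ← Matrix.vecMul_vecMul, ← Matrix.vecMul_vecMul, Matrix.vecMul_transpose]

theorem BF_add_left (u v w : Fin 7 → K) : BF (u + v) w = BF u w + BF v w := by
  simp [BF, add_dotProduct]
theorem BF_add_right (u v w : Fin 7 → K) : BF u (v + w) = BF u v + BF u w := by
  simp [BF, Matrix.mulVec_add, dotProduct_add]
theorem BF_symm (u v : Fin 7 → K) : BF u v = BF v u := by
  rw [BF_eq, BF_eq]; ring
theorem BF_sum {ι : Type*} (s : Finset ι) (u : Fin 7 → K) (f : ι → Fin 7 → K) :
    BF u (∑ k ∈ s, f k) = ∑ k ∈ s, BF u (f k) := by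
  classical
  induction s using Finset.induction_on with
  | empty => simp [BF]
  | insert a s ha ih => rw [Finset.sum_insert ha, Finset.sum_insert ha, BF_add_right, ih]

theorem exists_fixed [CharP K 3] {x : M7 K} (hx : Orth x) (hd : x.det = 1) :
    ∃ w, w ≠ 0 ∧ x *ᵥ w = w := by
  have hJ : (Jm : M7 K) * Jm = 1 := by
    ext i j
    rw [mul7]
    fin_cases i <;> fin_cases j <;> simp [Jm]
  have hJd : (Jm : M7 K).det ≠ 0 := by
    intro h
    have := congrArg Matrix.det hJ
    rw [Matrix.det_mul, h] at this; simp at this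
  have h1 : (Jm : M7 K) * (x - 1) = (-(x - 1))ᵀ * Jm * x := by
    rw [mul_sub, mul_one, Matrix.transpose_neg, Matrix.transpose_sub, Matrix.transpose_one,
      neg_mul, neg_mul, sub_mul, sub_mul, one_mul, show xᵀ * Jm * x = Jm from hx, neg_sub]
  have h2 := congrArg Matrix.det h1
  rw [Matrix.det_mul, Matrix.det_mul, Matrix.det_mul, hd, Matrix.det_transpose, Matrix.det_neg] at h2
  simp only [Fintype.card_fin] at h2
  have h3 : (3 : K) = 0 := CharP.cast_eq_zero K 3
  have h4 : (Jm : M7 K).det * (x - 1).det = 0 := by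
    have : (-1 : K)^7 = -1 := by norm_num
    rw [this] at h2
    linear_combination (-1) * h2 + (Jm : M7 K).det * (x - 1).det * h3
  have h5 := (mul_eq_zero.1 h4).resolve_left hJd
  obtain ⟨w, hw, hw2⟩ := Matrix.exists_mulVec_eq_zero_iff.2 h5
  refine ⟨w, hw, ?_⟩
  rwa [Matrix.sub_mulVec, Matrix.one_mulVec, sub_eq_zero] at hw2

theorem exists_fixed_aniso [CharP K 3] [IsAlgClosed K] {x : M7 K} (hx : Orth x) (hd : x.det = 1)
    {n : ℕ} (hn : (n : K) ≠ 0) (hxn : x ^ n = 1) :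
    ∃ w, BF w w = -1 ∧ x *ᵥ w = w := by
  have h3 : (3 : K) = 0 := CharP.cast_eq_zero K 3
  obtain ⟨w0, hw0, hfix⟩ := exists_fixed hx hd
  have hex : ∃ w, BF w w ≠ 0 ∧ x *ᵥ w = w := by
    by_contra! hcon
    have iso : ∀ w, x *ᵥ w = w → BF w w = 0 := fun w hw => by
      by_contra h; exact hcon w h hw
    have pol : ∀ u v, x *ᵥ u = u → x *ᵥ v = v → BF u v = 0 := by
      intro u v hu hv
      have := iso (u + v) (by rw [Matrix.mulVec_add, hu, hv])
      rw [BF_add_left, BF_add_right, BF_add_right, iso u hu, iso v hv, BF_symm v u] at this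
      linear_combination (-1) * this + BF u v * h3
    have hpw : ∀ k : ℕ, x ^ k *ᵥ w0 = w0 := by
      intro k
      induction k with
      | zero => simp
      | succ k ih => rw [pow_succ, ← Matrix.mulVec_mulVec, hfix, ih]
    have hpo : ∀ k : ℕ, Orth (x ^ k) := by
      intro k
      induction k with
      | zero => simpa using Orth.one
      | succ k ih => rw [pow_succ]; exact ih.mul hx
    have hz : ∀ v, BF w0 v = 0 := by
      intro v
      have e1 : x *ᵥ (∑ k ∈ Finset.range n, x ^ k *ᵥ v) = ∑ k ∈ Finset.range n, x ^ k *ᵥ v := by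
        have h := mul_geom_sum x n
        rw [hxn, sub_self, sub_mul, one_mul, sub_eq_zero] at h
        rw [← Matrix.sum_mulVec, Matrix.mulVec_mulVec, h]
      have e2 := pol w0 _ hfix e1
      rw [BF_sum] at e2
      have e3 : ∀ k ∈ Finset.range n, BF w0 (x ^ k *ᵥ v) = BF w0 v := by
        intro k _
        conv_lhs => rw [← hpw k]
        exact BF_inv (hpo k) _ _
      rw [Finset.sum_congr rfl e3, Finset.sum_const, Finset.card_range, nsmul_eq_mul] at e2
      exact (mul_eq_zero.1 e2).resolve_left hn
    apply hw0
    ext i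
    have a := fun j => hz (ee j)
    have a0 := a 0
    have a1 := a 1
    have a2 := a 2
    have a3 := a 3
    have a4 := a 4
    have a5 := a 5
    have a6 := a 6
    simp [BF_eq, ee] at a0 a1 a2 a3 a4 a5 a6
    fin_cases i <;> simpa
  obtain ⟨w, hw, hwf⟩ := hex
  obtain ⟨z, hz⟩ := IsAlgClosed.exists_pow_nat_eq (-(BF w w)⁻¹) (n := 2) (by norm_num)
  refine ⟨z • w, ?_, by rw [Matrix.mulVec_smul, hwf]⟩
  have : BF (z • w) (z • w) = z ^ 2 * BF w w := by rw [BF_eq, BF_eq]; simp; ring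
  rw [this, hz, neg_mul, inv_mul_cancel₀ hw]

/-- same orbit under the group -/
def Orb (v w : Fin 7 → K) : Prop := ∃ p ∈ GG K, (p.1 : M7 K) *ᵥ v = w

theorem Orb.trans {u v w : Fin 7 → K} (h : Orb u v) (h' : Orb v w) : Orb u w := by
  obtain ⟨p, hp, e⟩ := h
  obtain ⟨q, hq, e'⟩ := h'
  exact ⟨q * p, mul_mem hq hp, by
    rw [Prod.fst_mul, Units.val_mul, ← Matrix.mulVec_mulVec, e, e']⟩

theorem Orb.symm {u v : Fin 7 → K} (h : Orb u v) : Orb v u := by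
  obtain ⟨p, hp, e⟩ := h
  refine ⟨p⁻¹, inv_mem hp, ?_⟩
  rw [← e, Prod.fst_inv, Matrix.mulVec_mulVec, ← Units.val_mul, inv_mul_cancel, Units.val_one,
    Matrix.one_mulVec]

theorem orb_al (x X : K) (v : Fin 7 → K) : Orb v (al x X *ᵥ v) := ⟨_, GG_al x X, rfl⟩
theorem orb_be (x X : K) (v : Fin 7 → K) : Orb v (be x X *ᵥ v) := ⟨_, GG_be x X, rfl⟩
theorem orb_ga (x X : K) (v : Fin 7 → K) : Orb v (ga x X *ᵥ v) := ⟨_, GG_ga x X, rfl⟩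
theorem orb_ups (v : Fin 7 → K) : Orb v (ups *ᵥ v) := ⟨_, GG_ups, rfl⟩

variable [CharP K 3]

theorem Orb.form {u v : Fin 7 → K} (h : Orb u v) : BF v v = BF u u := by
  obtain ⟨p, hp, e⟩ := h
  rw [← e, BF_inv (GG_prop hp).1.2]

theorem orb_main {v : Fin 7 → K} (hv : BF v v = -1) (h6 : v 6 ≠ 0) : Orb v (ee 0 + ee 6) := by
  have h3 : (3 : K) = 0 := CharP.cast_eq_zero K 3
  obtain ⟨v1, hv1, a⟩ : ∃ v1, v1 = al 0 (v 5 / v 6) *ᵥ v ∧ Orb v v1 := ⟨_, rfl, orb_al _ _ _⟩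
  have a6 : v1 6 = v 6 := by rw [hv1, mulVec7]; simp [al]
  have a5 : v1 5 = 0 := by rw [hv1, mulVec7]; simp [al]; field_simp; ring
  obtain ⟨v2, hv2, b⟩ : ∃ v2, v2 = be 0 (-v1 4 / v 6) *ᵥ v1 ∧ Orb v1 v2 := ⟨_, rfl, orb_be _ _ _⟩
  have b6 : v2 6 = v 6 := by rw [hv2, mulVec7]; simp [be, a6]
  have b5 : v2 5 = 0 := by rw [hv2, mulVec7]; simp [be, a5]
  have b4 : v2 4 = 0 := by rw [hv2, mulVec7]; simp [be, a6]; field_simp; ring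
  obtain ⟨v3, hv3, c⟩ : ∃ v3, v3 = ga 0 (v2 3 / v 6) *ᵥ v2 ∧ Orb v2 v3 := ⟨_, rfl, orb_ga _ _ _⟩
  have c6 : v3 6 = v 6 := by rw [hv3, mulVec7]; simp [ga, b6]
  have c5 : v3 5 = 0 := by rw [hv3, mulVec7]; simp [ga, b5]
  have c4 : v3 4 = 0 := by rw [hv3, mulVec7]; simp [ga, b4]
  have c3 : v3 3 = 0 := by rw [hv3, mulVec7]; simp [ga, b6]; field_simp; ring
  obtain ⟨v4, hv4, d⟩ : ∃ v4, v4 = be (-v3 2 / v 6) 0 *ᵥ v3 ∧ Orb v3 v4 := ⟨_, rfl, orb_be _ _ _⟩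
  have d6 : v4 6 = v 6 := by rw [hv4, mulVec7]; simp [be, c6]
  have d5 : v4 5 = 0 := by rw [hv4, mulVec7]; simp [be, c5]
  have d4 : v4 4 = 0 := by rw [hv4, mulVec7]; simp [be, c4]
  have d3 : v4 3 = 0 := by rw [hv4, mulVec7]; simp [be, c3]
  have d2 : v4 2 = 0 := by rw [hv4, mulVec7]; simp [be, c6]; field_simp; ring
  obtain ⟨v5, hv5, e⟩ : ∃ v5, v5 = ga (-v4 1 / v 6) 0 *ᵥ v4 ∧ Orb v4 v5 := ⟨_, rfl, orb_ga _ _ _⟩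
  have e6 : v5 6 = v 6 := by rw [hv5, mulVec7]; simp [ga, d6]
  have e5 : v5 5 = 0 := by rw [hv5, mulVec7]; simp [ga, d5]
  have e4 : v5 4 = 0 := by rw [hv5, mulVec7]; simp [ga, d4]
  have e3 : v5 3 = 0 := by rw [hv5, mulVec7]; simp [ga, d3]
  have e2 : v5 2 = 0 := by rw [hv5, mulVec7]; simp [ga, d2]
  have e1 : v5 1 = 0 := by rw [hv5, mulVec7]; simp [ga, d6]; field_simp; ring
  have o : Orb v v5 := a.trans (b.trans (c.trans (d.trans e)))
  have hf := o.form
  rw [hv, BF_eq] at hf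
  simp [e1, e2, e3, e4, e5, e6] at hf
  have e0 : v5 0 * v 6 = 1 := by linear_combination (-1) * hf + v5 0 * v 6 * h3
  refine o.trans ⟨_, GG_Tm (v 6) 1 h6 one_ne_zero, ?_⟩
  ext i
  rw [mkG_val, Tm, Matrix.mulVec_diagonal]
  fin_cases i <;> simp [ee, e1, e2, e3, e4, e5, e6, h6]
  rw [mul_comm]; exact e0

theorem orb_all {v : Fin 7 → K} (hv : BF v v = -1) : Orb v (ee 0 + ee 6) := by
  have h3 : (3 : K) = 0 := CharP.cast_eq_zero K 3
  have key1 : ∀ v : Fin 7 → K, BF v v = -1 → v 2 ≠ 0 → Orb v (ee 0 + ee 6) := by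
    intro v hv h2
    by_cases h6 : v 6 = 0
    swap
    · exact orb_main hv h6
    have o : Orb v (ups *ᵥ (be 1 0 *ᵥ (ups *ᵥ v))) :=
      (orb_ups _).trans ((orb_be _ _ _).trans (orb_ups _))
    refine o.trans (orb_main (by rw [o.form, hv]) ?_)
    have u0 : (ups *ᵥ v) 0 = 0 := by rw [mulVec7]; simp [ups, h6]
    have u4 : (ups *ᵥ v) 4 = -v 2 := by rw [mulVec7]; simp [ups]
    generalize ups *ᵥ v = w at u0 u4
    have u7 : (be 1 0 *ᵥ w) 0 = v 2 := by rw [mulVec7]; simp [be, u0, u4]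
    generalize be 1 0 *ᵥ w = w' at u7
    rw [mulVec7]; simp [ups, u7, h2]
  have key2 : ∀ v : Fin 7 → K, BF v v = -1 → v 1 ≠ 0 → Orb v (ee 0 + ee 6) := by
    intro v hv h2
    by_cases h6 : v 6 = 0
    swap
    · exact orb_main hv h6
    have o : Orb v (ups *ᵥ (ga 1 0 *ᵥ (ups *ᵥ v))) :=
      (orb_ups _).trans ((orb_ga _ _ _).trans (orb_ups _))
    refine o.trans (orb_main (by rw [o.form, hv]) ?_)
    have u0 : (ups *ᵥ v) 0 = 0 := by rw [mulVec7]; simp [ups, h6]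
    have u4 : (ups *ᵥ v) 5 = -v 1 := by rw [mulVec7]; simp [ups]
    generalize ups *ᵥ v = w at u0 u4
    have u7 : (ga 1 0 *ᵥ w) 0 = v 1 := by rw [mulVec7]; simp [ga, u0, u4]
    generalize ga 1 0 *ᵥ w = w' at u7
    rw [mulVec7]; simp [ups, u7, h2]
  by_cases h6 : v 6 = 0
  swap
  · exact orb_main hv h6
  by_cases h2 : v 2 = 0
  swap
  · exact key1 v hv h2
  by_cases h1 : v 1 = 0
  swap
  · exact key2 v hv h1
  have oU := orb_ups v
  have hU : BF (ups *ᵥ v) (ups *ᵥ v) = -1 := by rw [oU.form, hv]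
  by_cases h0 : v 0 = 0
  swap
  · exact oU.trans (orb_main hU (by rw [mulVec7]; simp [ups, h0]))
  by_cases h5 : v 5 = 0
  swap
  · exact oU.trans (key2 _ hU (by rw [mulVec7]; simp [ups, h5]))
  by_cases h4 : v 4 = 0
  swap
  · exact oU.trans (key1 _ hU (by rw [mulVec7]; simp [ups, h4]))
  have o := orb_al 0 1 v
  refine o.trans (key1 _ (by rw [o.form, hv]) ?_)
  have h33 : v 3 ≠ 0 := by
    intro h
    rw [BF_eq] at hv
    simp [h, h0, h1, h2, h4, h5, h6] at hv
  rw [mulVec7]; simp [al, h0, h1, h2, h4, h5, h6, h33]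

theorem orb_e3 {v : Fin 7 → K} (hv : BF v v = -1) : Orb (ee 3) v :=
  (orb_all (by rw [BF_eq]; simp [ee])).trans (orb_all hv).symm

theorem diagz [IsAlgClosed K] {p : G7 K × G7 K} (hp : p ∈ GG K) {n : ℕ} (hn : (n : K) ≠ 0)
    (hpn : p.1 ^ n = 1) :
    ∃ x ∈ GG K, ∃ y z : K, y ≠ 0 ∧ z ≠ 0 ∧
      (p.1 : M7 K) * (x.1 : M7 K) = (x.1 : M7 K) * Tm y z := by
  obtain ⟨⟨pa, po⟩, pI, pd⟩ := GG_prop hp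
  have hpn' : (p.1 : M7 K) ^ n = 1 := by
    rw [← Units.val_pow_eq_pow_val, hpn, Units.val_one]
  obtain ⟨w, hw, hwf⟩ := exists_fixed_aniso po pd hn hpn'
  obtain ⟨q, hq, hqw⟩ := orb_e3 hw
  set g := q⁻¹ * p * q with hg
  have hgm : g ∈ GG K := mul_mem (mul_mem (inv_mem hq) hp) hq
  have hqi : ∀ u v, (q.1 : M7 K) *ᵥ u = v → ((q.1⁻¹ : G7 K) : M7 K) *ᵥ v = u := by
    intro u v h
    rw [← h, Matrix.mulVec_mulVec, ← Units.val_mul, inv_mul_cancel, Units.val_one,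
      Matrix.one_mulVec]
  have g3 : (g.1 : M7 K) *ᵥ ee 3 = ee 3 := by
    rw [hg]
    simp only [Prod.fst_mul, Prod.fst_inv, Units.val_mul, ← Matrix.mulVec_mulVec]
    rw [hqw, hwf]
    exact hqi _ _ hqw
  have gn : g.1 ^ n = 1 := by
    rw [hg]
    have : (q⁻¹ * p * q).1 = q.1⁻¹ * p.1 * (q.1⁻¹)⁻¹ := by simp
    rw [this, conj_pow, hpn]; simp
  have gn' : (g.1 : M7 K) ^ n = 1 := by
    rw [← Units.val_pow_eq_pow_val, gn, Units.val_one]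
  have hact := act3_fix (GG_prop hgm).1.1 g3
  set N := (g.1 : M7 K).submatrix f3 f3 with hN
  have hNn : N ^ n = 1 := by
    have := hact.pow n
    rw [gn'] at this
    exact this.unique Act3.one
  obtain ⟨Y, D, hY, hD⟩ := diag3 N n hn hNn
  obtain ⟨r, hr, r3, rA⟩ := sl3 Y hY
  have hri : ∀ u v, (r.1 : M7 K) *ᵥ u = v → ((r.1⁻¹ : G7 K) : M7 K) *ᵥ v = u := by
    intro u v h
    rw [← h, Matrix.mulVec_mulVec, ← Units.val_mul, inv_mul_cancel, Units.val_one,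
      Matrix.one_mulVec]
  set k := r⁻¹ * g * r with hk
  have hkm : k ∈ GG K := mul_mem (mul_mem (inv_mem hr) hgm) hr
  have k3 : (k.1 : M7 K) *ᵥ ee 3 = ee 3 := by
    rw [hk]
    simp only [Prod.fst_mul, Prod.fst_inv, Units.val_mul, ← Matrix.mulVec_mulVec]
    rw [r3, g3]
    exact hri _ _ r3
  have kd : ∀ j, (k.1 : M7 K) *ᵥ ee (f3 j) = D j • ee (f3 j) := by
    intro j
    have e1 : (g.1 : M7 K) *ᵥ ((r.1 : M7 K) *ᵥ ee (f3 j)) = (r.1 : M7 K) *ᵥ (D j • ee (f3 j)) := by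
      have := (hact.mul rA) j
      rw [hD] at this
      rw [Matrix.mulVec_mulVec, this, Matrix.mulVec_smul, rA j]
      simp only [Matrix.mul_diagonal]
      module
    rw [hk]
    simp only [Prod.fst_mul, Prod.fst_inv, Units.val_mul, ← Matrix.mulVec_mulVec]
    rw [e1]
    exact hri _ _ rfl
  obtain ⟨hy, hz, hT⟩ := eq_Tm (GG_prop hkm).1.1 k3 (kd 0) (kd 1) (kd 2)
  refine ⟨q * r, mul_mem hq hr, D 0, D 1, hy, hz, ?_⟩
  rw [← hT, ← Units.val_mul, ← Units.val_mul]
  congr 1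
  rw [hk, hg]
  simp only [Prod.fst_mul, Prod.fst_inv]
  group

end fixv
end RX

namespace RX

section weyl
variable {K : Type*} [Field K] [CharP K 3]

/-- conjugacy of torus elements -/
def TC (a b a' b' : K) : Prop :=
  ∃ n ∈ GG K, Tm a b * (n.1 : M7 K) = (n.1 : M7 K) * Tm a' b'

theorem TC.refl (a b : K) : TC a b a b := ⟨1, one_mem _, by simp⟩

theorem TC.trans {a b a' b' a'' b'' : K} (h : TC a b a' b') (h' : TC a' b' a'' b'') :
    TC a b a'' b'' := by
  obtain ⟨n, hn, e⟩ := h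
  obtain ⟨n', hn', e'⟩ := h'
  refine ⟨n * n', mul_mem hn hn', ?_⟩
  simp only [Prod.fst_mul, Units.val_mul]
  rw [← Matrix.mul_assoc, e, Matrix.mul_assoc, e', Matrix.mul_assoc]

theorem TC_inv (a b : K) : TC a b a⁻¹ b⁻¹ := ⟨_, GG_ups, by simpa using Tm_ups a b⟩

theorem Tm_ee (a b : K) (i : Fin 7) :
    Tm a b *ᵥ ee i = (![a*b, a, b, 1, b⁻¹, a⁻¹, (a*b)⁻¹] i) • ee i := by
  ext j
  rw [mulVec_ee, Tm, Matrix.diagonal_apply]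
  by_cases h : j = i
  · subst h; simp [ee]
  · simp [ee, h]

theorem conj_ee {n : G7 K} {T : M7 K} {i j : Fin 7} {c μ : K} (hn : (n : M7 K) *ᵥ ee i = c • ee j)
    (hT : T *ᵥ ee j = μ • ee j) :
    (((n⁻¹ : G7 K) : M7 K) * T * (n : M7 K)) *ᵥ ee i = μ • ee i := by
  rw [← Matrix.mulVec_mulVec, hn, Matrix.mulVec_smul, ← Matrix.mulVec_mulVec, hT,
    Matrix.mulVec_smul, smul_comm, ← Matrix.mulVec_smul, ← hn, Matrix.mulVec_mulVec,
    ← Units.val_mul, inv_mul_cancel, Units.val_one, Matrix.one_mulVec]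

theorem TC_of {a b : K} (ha : a ≠ 0) (hb : b ≠ 0) {p : G7 K × G7 K} (hp : p ∈ GG K)
    (h3 : (p.1 : M7 K) *ᵥ ee 3 = ee 3) {i j k : Fin 7} {c1 c2 c3 : K}
    (h1 : (p.1 : M7 K) *ᵥ ee 1 = c1 • ee i) (h2 : (p.1 : M7 K) *ᵥ ee 2 = c2 • ee j)
    (h6 : (p.1 : M7 K) *ᵥ ee 6 = c3 • ee k) :
    TC a b (![a*b, a, b, 1, b⁻¹, a⁻¹, (a*b)⁻¹] i) (![a*b, a, b, 1, b⁻¹, a⁻¹, (a*b)⁻¹] j) := by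
  have hm := mul_mem (mul_mem (inv_mem hp) (GG_Tm a b ha hb)) hp
  have hA := (GG_prop hm).1.1
  simp only [Prod.fst_mul, Prod.fst_inv, Units.val_mul, mkG_val] at hA
  have h3' := conj_ee (n := p.1) (c := 1) (by rw [h3, one_smul]) (Tm_ee a b 3)
  have e := (eq_Tm hA (by simpa using h3') (conj_ee h1 (Tm_ee a b i)) (conj_ee h2 (Tm_ee a b j))
    (conj_ee h6 (Tm_ee a b k))).2.2
  refine ⟨p, hp, ?_⟩
  rw [← e, ← Matrix.mul_assoc, ← Matrix.mul_assoc, ← Units.val_mul, mul_inv_cancel, Units.val_one,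
    Matrix.one_mul]

theorem TC_swap {a b : K} (ha : a ≠ 0) (hb : b ≠ 0) : TC a b b a := by
  obtain ⟨p, hp, h3, hA⟩ := sl3 (K := K) !![0, -1, 0; -1, 0, 0; 0, 0, -1]
    (by simp [Matrix.det_fin_three])
  have h1 : (p.1 : M7 K) *ᵥ ee 1 = (-1 : K) • ee 2 := by simpa [f3] using hA 0
  have h2 : (p.1 : M7 K) *ᵥ ee 2 = (-1 : K) • ee 1 := by simpa [f3] using hA 1
  have h6 : (p.1 : M7 K) *ᵥ ee 6 = (-1 : K) • ee 6 := by simpa [f3] using hA 2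
  simpa using TC_of ha hb hp h3 h1 h2 h6

theorem TC_cyc {a b : K} (ha : a ≠ 0) (hb : b ≠ 0) : TC a b b (a*b)⁻¹ := by
  obtain ⟨p, hp, h3, hA⟩ := sl3 (K := K) !![0, 0, 1; 1, 0, 0; 0, 1, 0]
    (by simp [Matrix.det_fin_three])
  have h1 : (p.1 : M7 K) *ᵥ ee 1 = (1 : K) • ee 2 := by simpa [f3] using hA 0
  have h2 : (p.1 : M7 K) *ᵥ ee 2 = (1 : K) • ee 6 := by simpa [f3] using hA 1
  have h6 : (p.1 : M7 K) *ᵥ ee 6 = (1 : K) • ee 1 := by simpa [f3] using hA 2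
  simpa using TC_of ha hb hp h3 h1 h2 h6

theorem trace_Tm (a b : K) : (Tm a b).trace = 1 + (a + a⁻¹) + (b + b⁻¹) + (a*b + (a*b)⁻¹) := by
  simp [Matrix.trace, Fin.sum_univ_succ, Tm, Matrix.diagonal]
  ring

theorem inv_case {a b : K} (ha : a ≠ 0) (hb : b ≠ 0) (h : a + a⁻¹ = b + b⁻¹) : a = b ∨ a = b⁻¹ := by
  have : (a - b) * (a * b - 1) = 0 := by field_simp at h; linear_combination h
  rcases mul_eq_zero.1 this with h | h
  · left; linear_combination h
  · right; field_simp; linear_combination h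

/-- final step: `a' = a`, `B' = B`, `C' = C` -/
theorem weyl2 {a b b' : K} (ha : a ≠ 0) (hb : b ≠ 0) (hb' : b' ≠ 0) (h : b + b⁻¹ = b' + b'⁻¹)
    (hc : a * b + (a * b)⁻¹ = a * b' + (a * b')⁻¹) : TC a b a b' := by
  rcases inv_case hb hb' h with rfl | h
  · exact TC.refl _ _
  have h' : b' = b⁻¹ := by rw [h, inv_inv]
  subst h'
  have : (a^2 - 1) * (b^2 - 1) = 0 := by field_simp at hc; linear_combination hc
  rcases mul_eq_zero.1 this with h | h
  · have := TC_inv a b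
    rwa [show a⁻¹ = a by field_simp; linear_combination -h] at this
  · have e : b⁻¹ = b := by field_simp; linear_combination -h
    rw [e]; exact TC.refl _ _

/-- second step: `A' = A` -/
theorem weyl1 {a b a' b' : K} (ha : a ≠ 0) (hb : b ≠ 0) (ha' : a' ≠ 0) (hb' : b' ≠ 0)
    (h : a + a⁻¹ = a' + a'⁻¹) (h1 : (b + b⁻¹) + (a * b + (a * b)⁻¹) = (b' + b'⁻¹) + (a' * b' + (a' * b')⁻¹))
    (h2 : (b + b⁻¹) * (a * b + (a * b)⁻¹) = (b' + b'⁻¹) * (a' * b' + (a' * b')⁻¹)) : TC a b a' b' := by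
  have key : ∀ {a b b' : K}, a ≠ 0 → b ≠ 0 → b' ≠ 0 →
      ((b + b⁻¹) + (a * b + (a * b)⁻¹) = (b' + b'⁻¹) + (a * b' + (a * b')⁻¹)) → 
      ((b + b⁻¹) * (a * b + (a * b)⁻¹) = (b' + b'⁻¹) * (a * b' + (a * b')⁻¹)) → TC a b a b' := by
    intro a b b' ha hb hb' h1 h2
    have : ((b + b⁻¹) - (b' + b'⁻¹)) * ((a * b + (a * b)⁻¹) - (b' + b'⁻¹)) = 0 := by
      linear_combination (-(b' + b'⁻¹)) * h1 + h2
    rcases mul_eq_zero.1 this with h | h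
    · exact weyl2 ha hb hb' (sub_eq_zero.1 h) (by linear_combination h1 - h)
    · -- swap b and c
      have s1 := TC_swap ha hb
      have s2 : TC b a a (b * a)⁻¹ := TC_cyc hb ha
      refine s1.trans (s2.trans (weyl2 ha (by positivity) hb' ?_ ?_))
      · rw [inv_inv, mul_comm b a]; linear_combination h
      · have : a * (b * a)⁻¹ = b⁻¹ := by field_simp
        rw [this, inv_inv]
        linear_combination h1 - h
  rcases inv_case ha ha' h with rfl | h
  · exact key ha hb hb' h1 h2
  · have h' : a' = a⁻¹ := by rw [h, inv_inv]
    subst h'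
    have s := key (inv_ne_zero ha) (inv_ne_zero hb) hb' 
      (by rw [← h1, inv_inv, ← mul_inv, inv_inv]; ring) (by rw [← h2, inv_inv, ← mul_inv, inv_inv]; ring)
    exact (TC_inv a b).trans s

theorem weyl {a b a' b' : K} (ha : a ≠ 0) (hb : b ≠ 0) (ha' : a' ≠ 0) (hb' : b' ≠ 0)
    (h : (Tm a b).trace = (Tm a' b').trace)
    (h2 : (Tm (a * b^2) (a * b⁻¹)).trace = (Tm (a' * b'^2) (a' * b'⁻¹)).trace) : TC a b a' b' := by
  rw [trace_Tm, trace_Tm] at h h2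
  have e2 : ∀ {a b : K}, a ≠ 0 → b ≠ 0 → (a + a⁻¹) * (b + b⁻¹) + (a + a⁻¹) * (a * b + (a * b)⁻¹)
      + (b + b⁻¹) * (a * b + (a * b)⁻¹) = 
      (a * b ^ 2 + (a * b ^ 2)⁻¹ + (a * b⁻¹ + (a * b⁻¹)⁻¹) +
      (a * b ^ 2 * (a * b⁻¹) + (a * b ^ 2 * (a * b⁻¹))⁻¹)) +
      ((a + a⁻¹) + (b + b⁻¹) + (a*b + (a*b)⁻¹)) := by
    intro a b ha hb
    field_simp
    ring
  have e3 : ∀ {a b : K}, a ≠ 0 → b ≠ 0 → (a + a⁻¹) * (b + b⁻¹) * (a * b + (a * b)⁻¹) =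
      (a + a⁻¹)^2 + (b + b⁻¹)^2 + (a * b + (a * b)⁻¹)^2 - 4 := by
    intro a b ha hb
    field_simp
    ring
  have f2 := e2 ha hb
  have f2' := e2 ha' hb'
  have f3 := e3 ha hb
  have f3' := e3 ha' hb'
  have hA : a + a⁻¹ = a + a⁻¹ := rfl
  generalize hX : a' * b' ^ 2 + (a' * b' ^ 2)⁻¹ = X' at *
  generalize hY : a' * b'⁻¹ + (a' * b'⁻¹)⁻¹ = Y' at *
  generalize hZ : a' * b' ^ 2 * (a' * b'⁻¹) + (a' * b' ^ 2 * (a' * b'⁻¹))⁻¹ = Z' at *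
  generalize hX1 : a * b ^ 2 + (a * b ^ 2)⁻¹ = X at *
  generalize hY1 : a * b⁻¹ + (a * b⁻¹)⁻¹ = Y at *
  generalize hZ1 : a * b ^ 2 * (a * b⁻¹) + (a * b ^ 2 * (a * b⁻¹))⁻¹ = Z at *
  have main : ∀ {A B C A' B' C' : K}, 1 + A + B + C = 1 + A' + B' + C' →
     A * B + A * C + B * C = A' * B' + A' * C' + B' * C' → A * B * C = A' * B' * C' →
     A = A' ∨ B = A' ∨ C = A' := by
    intro A B C A' B' C' k1 k2 k3
    have : (A - A') * ((B - A') * (C - A')) = 0 := by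
      linear_combination k3 - A' * k2 + A'^2 * k1
    rcases mul_eq_zero.1 this with h | h
    · exact Or.inl (sub_eq_zero.1 h)
    rcases mul_eq_zero.1 h with h | h
    · exact Or.inr (Or.inl (sub_eq_zero.1 h))
    · exact Or.inr (Or.inr (sub_eq_zero.1 h))
  have k2 : (a + a⁻¹) * (b + b⁻¹) + (a + a⁻¹) * (a * b + (a * b)⁻¹)
      + (b + b⁻¹) * (a * b + (a * b)⁻¹) = (a' + a'⁻¹) * (b' + b'⁻¹) + (a' + a'⁻¹) * (a' * b' + (a' * b')⁻¹)
      + (b' + b'⁻¹) * (a' * b' + (a' * b')⁻¹) := by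
    rw [f2, f2']; linear_combination h2 + h
  have k3 : (a + a⁻¹) * (b + b⁻¹) * (a * b + (a * b)⁻¹) =
      (a' + a'⁻¹) * (b' + b'⁻¹) * (a' * b' + (a' * b')⁻¹) := by
    rw [f3, f3']
    generalize a' + a'⁻¹ = A' at *
    generalize b' + b'⁻¹ = B' at *
    generalize a' * b' + (a' * b')⁻¹ = C' at *
    generalize a + a⁻¹ = A at *
    generalize b + b⁻¹ = B at *
    generalize a * b + (a * b)⁻¹ = C at *
    linear_combination (A + B + C + A' + B' + C') * h - 2 * k2
  rcases main h k2 k3 with hh | hh | hh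
  · refine weyl1 ha hb ha' hb' hh (by linear_combination h - hh) ?_
    have q : ((b + b⁻¹) + (a * b + (a * b)⁻¹)) = (b' + b'⁻¹) + (a' * b' + (a' * b')⁻¹) := by
      linear_combination h - hh
    linear_combination k2 - (a + a⁻¹) * q - ((b' + b'⁻¹) + (a' * b' + (a' * b')⁻¹)) * hh
  · have ec : b * (a * b)⁻¹ = a⁻¹ := by field_simp
    refine (TC_cyc ha hb).trans (weyl1 hb (by positivity) ha' hb' hh ?_ ?_)
    · rw [ec, inv_inv, inv_inv]; linear_combination h - hh
    · rw [ec, inv_inv, inv_inv]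
      have q : ((a + a⁻¹) + (a * b + (a * b)⁻¹)) = (b' + b'⁻¹) + (a' * b' + (a' * b')⁻¹) := by
        linear_combination h - hh
      linear_combination k2 - (b + b⁻¹) * q - ((b' + b'⁻¹) + (a' * b' + (a' * b')⁻¹)) * hh
  · have ec : b * (a * b)⁻¹ = a⁻¹ := by field_simp
    have ed : (a * b)⁻¹ * (b * (a * b)⁻¹)⁻¹ = b⁻¹ := by field_simp
    have ee : (a * b)⁻¹ * a = b⁻¹ := by field_simp
    have s := TC_cyc hb (inv_ne_zero (mul_ne_zero ha hb))
    rw [ec, inv_inv] at s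
    refine (TC_cyc ha hb).trans (s.trans (weyl1 (by positivity) ha ha' hb' (by rw [inv_inv, ← hh]; ring) ?_ ?_))
    · rw [ee, inv_inv]; linear_combination h - hh
    · rw [ee, inv_inv]
      have q : ((a + a⁻¹) + (b + b⁻¹)) = (b' + b'⁻¹) + (a' * b' + (a' * b')⁻¹) := by
        linear_combination h - hh
      linear_combination k2 - (a * b + (a * b)⁻¹) * q - ((b' + b'⁻¹) + (a' * b' + (a' * b')⁻¹)) * hh

end weyl
end RX

namespace RX

section degen
variable {K : Type*} [Field K] [CharP K 3]

/-- diagonal entries of `Tm a b` -/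
def dT (a b : K) : Fin 7 → K := ![a*b, a, b, 1, b⁻¹, a⁻¹, (a*b)⁻¹]

theorem Tm_dT (a b : K) : Tm a b = Matrix.diagonal (dT a b) := rfl

theorem deg1 {φ : K →+* K} {τ σ : K} (h1 : σ = φ τ) (h2 : φ σ = τ ^ 3) (h : σ = τ ^ 2 + τ - 1) :
    τ = 1 ∨ τ = -1 := by
  have h3 : (3 : K) = 0 := CharP.cast_eq_zero K 3
  have e : φ σ = σ ^ 2 + σ - 1 := by
    conv_lhs => rw [h]
    rw [map_sub, map_add, map_pow, ← h1, map_one]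
  have : (τ - 1) ^ 3 * (τ + 1) = 0 := by
    rw [h2, h] at e
    linear_combination (-1 : K) * e + (τ - τ^3) * h3
  rcases mul_eq_zero.1 this with h | h
  · left; exact sub_eq_zero.1 (pow_eq_zero_iff (by norm_num) |>.1 h)
  · right; linear_combination h

theorem cube_inj {u v : K} (h : u ^ 3 = v ^ 3) : u = v :=
  frobenius_inj K 3 (by simpa [frobenius_def] using h)

/-- the case of a long root value `1` -/
theorem deg2 {φ : K →+* K} {τ σ s : K} (h1 : σ = φ τ) (h2 : φ σ = τ ^ 3) (h : σ = - s ^ 3) 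
    (h' : τ = s ^ 2 - s - 1) : τ = 1 ∨ τ = -1 := by
  have e : φ s = - τ := by
    apply cube_inj
    have : φ σ = - (φ s) ^ 3 := by rw [h]; simp
    linear_combination this.symm * (-1 : K) + h2 * (-1 : K)
  refine deg1 h1 h2 ?_
  rw [h1]
  conv_lhs => rw [h']
  rw [map_sub, map_sub, map_pow, e, map_one]; ring

theorem trace_Tm2 (a b : K) (ha : a ≠ 0) (hb : b ≠ 0) : (Tm (a * b^2) (a * b⁻¹)).trace =
    1 + (a * b^2 + (a * b^2)⁻¹) + (a * b⁻¹ + b * a⁻¹) + (a^2 * b + (a^2*b)⁻¹) := by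
  rw [trace_Tm]
  field_simp

theorem nodeg {φ : K →+* K} {a b : K} (ha : a ≠ 0) (hb : b ≠ 0)
    (h1 : (Tm (a * b^2) (a * b⁻¹)).trace = φ (Tm a b).trace)
    (h2 : φ (Tm (a * b^2) (a * b⁻¹)).trace = (Tm a b).trace ^ 3)
    (n1 : (Tm a b).trace ≠ 1) (n2 : (Tm a b).trace ≠ -1) :
    (a ≠ 1 ∧ b ≠ 1 ∧ a * b ≠ 1) ∧ (a ≠ -1 ∧ b ≠ -1 ∧ a * b ≠ -1) ∧
    (a ≠ b ∧ a ^ 2 * b ≠ 1 ∧ a * b ^ 2 ≠ 1) := by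
  have h3 : (3 : K) = 0 := CharP.cast_eq_zero K 3
  have hτ := trace_Tm a b
  have hσ := trace_Tm2 a b ha hb
  generalize (Tm (a * b^2) (a * b⁻¹)).trace = σ at *
  generalize (Tm a b).trace = τ at *
  have k1 : σ ≠ τ ^ 2 + τ - 1 := fun h => by
    rcases deg1 h1 h2 h with h | h
    · exact n1 h
    · exact n2 h
  have k2 : ∀ s : K, σ = - s ^ 3 → τ = s ^ 2 - s - 1 → False := fun s h h' => by
    rcases deg2 h1 h2 h h' with h | h
    · exact n1 h
    · exact n2 h
  refine ⟨⟨?_, ?_, ?_⟩, ⟨?_, ?_, ?_⟩, ?_, ?_, ?_⟩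
  · rintro rfl
    apply k1
    rw [hσ, hτ]; field_simp; ring_nf; try grind
  · rintro rfl
    apply k1
    rw [hσ, hτ]; field_simp; ring_nf; try grind
  · intro h
    obtain rfl : b = a⁻¹ := eq_inv_of_mul_eq_one_right h
    apply k1
    rw [hσ, hτ]; field_simp; ring_nf; try grind
  · rintro rfl
    apply n2
    rw [hτ]; field_simp; ring_nf; try grind
  · rintro rfl
    apply n2
    rw [hτ]; field_simp; ring_nf; try grind
  · intro h
    obtain rfl : b = -a⁻¹ := by field_simp; linear_combination h
    apply n2
    rw [hτ]; field_simp; ring_nf; try grind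
  · rintro rfl
    apply k2 (a + a⁻¹)
    · rw [hσ]; field_simp; ring_nf; try grind
    · rw [hτ]; field_simp; ring_nf; try grind
  · intro h
    obtain rfl : b = (a^2)⁻¹ := eq_inv_of_mul_eq_one_right h
    apply k2 (a + a⁻¹)
    · rw [hσ]; field_simp; ring_nf; try grind
    · rw [hτ]; field_simp; ring_nf; try grind
  · intro h
    obtain rfl : a = (b^2)⁻¹ := eq_inv_of_mul_eq_one_left h
    apply k2 (b + b⁻¹)
    · rw [hσ]; field_simp; ring_nf; try grind
    · rw [hτ]; field_simp; ring_nf; try grind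

theorem dT_inj {a b : K} (ha : a ≠ 0) (hb : b ≠ 0)
    (h1 : a ≠ 1 ∧ b ≠ 1 ∧ a * b ≠ 1) (h2 : a ≠ -1 ∧ b ≠ -1 ∧ a * b ≠ -1)
    (h3 : a ≠ b ∧ a ^ 2 * b ≠ 1 ∧ a * b ^ 2 ≠ 1) : Function.Injective (dT a b) := by
  obtain ⟨p1, p2, p3⟩ := h1
  obtain ⟨q1, q2, q3⟩ := h2
  obtain ⟨r1, r2, r3⟩ := h3
  have key : ∀ i j, i < j → dT a b i ≠ dT a b j := by
    have e1 : a * a⁻¹ = 1 := mul_inv_cancel₀ ha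
    have e2 : b * b⁻¹ = 1 := mul_inv_cancel₀ hb
    have e3 : (a * b)⁻¹ = a⁻¹ * b⁻¹ := mul_inv _ _
    have sq : ∀ x : K, x * x = 1 → x = 1 ∨ x = -1 := fun x h => mul_self_eq_one_iff.1 h
    have s1 := sq a
    have s2 := sq b
    have s3 := sq (a * b)
    intro i j hij
    simp only [dT, e3]
    generalize a⁻¹ = a' at *
    generalize b⁻¹ = b' at *
    fin_cases i <;> fin_cases j <;> first | (exfalso; revert hij; decide) | (simp; grind)
  intro i j h
  rcases lt_trichotomy i j with hl | hl | hl
  · exact absurd h (key _ _ hl)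
  · exact hl
  · exact absurd h.symm (key _ _ hl)

theorem dT_inj' {φ : K →+* K} {a b : K} (ha : a ≠ 0) (hb : b ≠ 0)
    (h1 : (Tm (a * b^2) (a * b⁻¹)).trace = φ (Tm a b).trace)
    (h2 : φ (Tm (a * b^2) (a * b⁻¹)).trace = (Tm a b).trace ^ 3)
    (n1 : (Tm a b).trace ≠ 1) (n2 : (Tm a b).trace ≠ -1) :
    Function.Injective (dT a b) ∧ Function.Injective (dT (a * b^2) (a * b⁻¹)) := by
  constructor
  · obtain ⟨u, v, w⟩ := nodeg ha hb h1 h2 n1 n2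
    exact dT_inj ha hb u v w
  · have e : (Tm (a * b ^ 2 * (a * b⁻¹) ^ 2) (a * b ^ 2 * (a * b⁻¹)⁻¹)).trace = (Tm a b).trace ^ 3 := by
      have : (Tm a b).trace ^ 3 = (Tm (a^3) (b^3)).trace := by
        have := map_Tm (frobenius K 3) a b
        simp only [frobenius_def] at this
        rw [← this, ← frobenius_def, ← AddMonoidHom.map_trace (frobenius K 3)]
      rw [this]
      congr 2 <;> (field_simp)
    obtain ⟨u, v, w⟩ := nodeg (φ := φ) (T2_ne ha hb).1 (T2_ne ha hb).2 (by rw [e, h2])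
      (by rw [e, map_pow, h1])
      (by rw [h1]; intro h; exact n1 (φ.injective (by rw [h, map_one])))
      (by rw [h1]; intro h; exact n2 (φ.injective (by rw [h, map_neg, map_one])))
    exact dT_inj (T2_ne ha hb).1 (T2_ne ha hb).2 u v w

end degen
end RX

namespace RX

section lang
variable {K : Type*} [Field K]

theorem diag_Tm {x : M7 K} (hx : Aut x) {D : Fin 7 → K} (h : x = Matrix.diagonal D)
    (hD : D 0 ≠ 0) : D 1 ≠ 0 ∧ D 2 ≠ 0 ∧ x = Tm (D 1) (D 2) := by
  have e : ∀ i, x *ᵥ ee i = D i • ee i := by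
    intro i; ext j
    rw [mulVec_ee, h, Matrix.diagonal_apply]
    by_cases hh : j = i
    · subst hh; simp [ee]
    · simp [ee, hh]
  have h3 := eig_cr hx (e 0) (e 6) cr06
  have h0 := eig_cr hx (e 0) (e 3) cr03
  have q : D 0 * D 3 = D 0 := by
    rw [e 0] at h0
    have := congrFun h0 0
    simpa [ee] using this.symm
  have q3 : D 3 = 1 := mul_left_cancel₀ hD (by rw [q, mul_one])
  exact eq_Tm hx (by rw [e 3, q3, one_smul]) (e 1) (e 2) (e 6)

theorem root_z [IsAlgClosed K] {n : ℤ} (hn : n ≠ 0) {a : K} (ha : a ≠ 0) :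
    ∃ u : K, u ≠ 0 ∧ u ^ n = a := by
  obtain ⟨k, rfl | rfl⟩ := n.eq_nat_or_neg
  · have hk : 0 < k := by omega
    obtain ⟨u, hu⟩ := IsAlgClosed.exists_pow_nat_eq a hk
    refine ⟨u, ?_, by simpa using hu⟩
    rintro rfl
    rw [zero_pow hk.ne'] at hu
    exact ha hu.symm
  · have hk : 0 < k := by omega
    obtain ⟨u, hu⟩ := IsAlgClosed.exists_pow_nat_eq a⁻¹ hk
    refine ⟨u, ?_, by rw [_root_.zpow_neg, zpow_natCast, hu, inv_inv]⟩
    rintro rfl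
    rw [zero_pow hk.ne'] at hu
    exact inv_ne_zero ha hu.symm

theorem monom [IsAlgClosed K] {a b c d : ℤ} (h : a * d - b * c ≠ 0) {p s : K} (hp : p ≠ 0)
    (hs : s ≠ 0) : ∃ y z : K, y ≠ 0 ∧ z ≠ 0 ∧ y ^ a * z ^ b = p ∧ y ^ c * z ^ d = s := by
  obtain ⟨u, hu, rfl⟩ := root_z h hp
  obtain ⟨v, hv, rfl⟩ := root_z h hs
  refine ⟨u ^ d * v ^ (-b), u ^ (-c) * v ^ a, mul_ne_zero (zpow_ne_zero _ hu) (zpow_ne_zero _ hv),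
    mul_ne_zero (zpow_ne_zero _ hu) (zpow_ne_zero _ hv), ?_, ?_⟩
  · rw [mul_zpow, mul_zpow, ← _root_.zpow_mul, ← _root_.zpow_mul, ← _root_.zpow_mul, ← _root_.zpow_mul, mul_mul_mul_comm,
      ← zpow_add₀ hu, ← zpow_add₀ hv]
    rw [show d * a + -c * b = a * d - b * c by ring, show -b * a + a * b = 0 by ring]; simp
  · rw [mul_zpow, mul_zpow, ← _root_.zpow_mul, ← _root_.zpow_mul, ← _root_.zpow_mul, ← _root_.zpow_mul, mul_mul_mul_comm,
      ← zpow_add₀ hu, ← zpow_add₀ hv]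
    rw [show d * c + -c * d = 0 by ring, show -b * c + a * d = a * d - b * c by ring]; simp

/-- exponents of the diagonal entries -/
theorem dT_exp (i : Fin 7) : ∃ k l : ℤ, ∀ y z : K, y ≠ 0 → z ≠ 0 → dT y z i = y ^ k * z ^ l := by
  fin_cases i
  · exact ⟨1, 1, fun y z _ _ => by simp [dT]⟩
  · exact ⟨1, 0, fun y z _ _ => by simp [dT]⟩
  · exact ⟨0, 1, fun y z _ _ => by simp [dT]⟩
  · exact ⟨0, 0, fun y z _ _ => by simp [dT]⟩
  · exact ⟨0, -1, fun y z _ _ => by simp [dT]⟩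
  · exact ⟨-1, 0, fun y z _ _ => by simp [dT]⟩
  · exact ⟨-1, -1, fun y z _ _ => by simp [dT, mul_comm]⟩

/-- solving the torus equation -/
theorem solve [IsAlgClosed K] (e : ℕ) (κ : Fin 7 → Fin 7) {p s : K} (hp : p ≠ 0) (hs : s ≠ 0) :
    ∃ y z : K, y ≠ 0 ∧ z ≠ 0 ∧ y * z ^ 2 = p * dT (y ^ (9 * e)) (z ^ (9 * e)) (κ 1) ∧
      y * z⁻¹ = s * dT (y ^ (9 * e)) (z ^ (9 * e)) (κ 2) := by
  obtain ⟨i, j, h1⟩ := dT_exp (K := K) (κ 1)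
  obtain ⟨k, l, h2⟩ := dT_exp (K := K) (κ 2)
  have hdet : (1 - 9 * e * i) * (-1 - 9 * e * l) - (2 - 9 * e * j) * (1 - 9 * e * k) ≠ (0 : ℤ) := by
    intro h
    have : (3 : ℤ) = 9 * (-(e * l) + e * i + e * i * (9 * e * l) + 2 * e * k + e * j - e * j * (9 * e * k)) := by
      linear_combination (-1 : ℤ) * h
    omega
  obtain ⟨y, z, hy, hz, e1, e2⟩ := monom hdet hp hs
  refine ⟨y, z, hy, hz, ?_, ?_⟩
  · rw [h1 _ _ (pow_ne_zero _ hy) (pow_ne_zero _ hz), ← e1, ← zpow_natCast y (9 * e), ← zpow_natCast z (9 * e), ← _root_.zpow_mul, ← _root_.zpow_mul,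
      mul_mul_mul_comm, ← zpow_add₀ hy, ← zpow_add₀ hz]
    push_cast
    rw [sub_add_cancel, sub_add_cancel]
    simp
  · rw [h2 _ _ (pow_ne_zero _ hy) (pow_ne_zero _ hz), ← e2, ← zpow_natCast y (9 * e), ← zpow_natCast z (9 * e), ← _root_.zpow_mul, ← _root_.zpow_mul,
      mul_mul_mul_comm, ← zpow_add₀ hy, ← zpow_add₀ hz]
    push_cast
    rw [sub_add_cancel, sub_add_cancel]
    simp

variable [CharP K 3]

theorem monomial_of {N : G7 K} {f r : Fin 7 → K} (hf : Function.Injective f)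
    (h : (N : M7 K) * Matrix.diagonal f = Matrix.diagonal r * (N : M7 K)) :
    ∃ κ : Fin 7 → Fin 7, ∀ e : Fin 7 → K,
      (N : M7 K) * Matrix.diagonal e = Matrix.diagonal (e ∘ κ) * (N : M7 K) := by
  have hex : ∀ j, ∃ k, (N : M7 K) j k ≠ 0 := by
    intro j
    by_contra hc
    push Not at hc
    have : (((N * N⁻¹ : G7 K) : M7 K)) j j = 0 := by
      rw [Units.val_mul, Matrix.mul_apply]
      exact Finset.sum_eq_zero fun k _ => by rw [hc k, zero_mul]
    rw [mul_inv_cancel] at this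
    simp at this
  choose κ hκ using hex
  have he : ∀ j k, (N : M7 K) j k ≠ 0 → f k = r j := by
    intro j k hk
    have := congrFun (congrFun h j) k
    rw [Matrix.mul_diagonal, Matrix.diagonal_mul, mul_comm] at this
    exact mul_right_cancel₀ hk this
  refine ⟨κ, fun e => ?_⟩
  ext j k
  rw [Matrix.mul_diagonal, Matrix.diagonal_mul]
  by_cases hk : (N : M7 K) j k = 0
  · rw [hk]; simp
  · have : k = κ j := hf (by rw [he j k hk, he j _ (hκ j)])
    rw [this, mul_comm]; rfl

theorem comm_diag {d : M7 K} {r : Fin 7 → K} (hr : Function.Injective r)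
    (h : d * Matrix.diagonal r = Matrix.diagonal r * d) : d = Matrix.diagonal (fun i => d i i) := by
  ext i j
  rw [Matrix.diagonal_apply]
  split_ifs with hij
  · rw [hij]
  · have := congrFun (congrFun h i) j
    rw [Matrix.mul_diagonal, Matrix.diagonal_mul] at this
    have h2 : d i j * (r j - r i) = 0 := by linear_combination this
    rcases mul_eq_zero.1 h2 with h | h
    · exact h
    · exact absurd (hr (sub_eq_zero.1 h)).symm hij

theorem diag_ne {x : G7 K} {D : Fin 7 → K} (h : (x : M7 K) = Matrix.diagonal D) (i : Fin 7) :
    D i ≠ 0 := by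
  intro h0
  have : (((x * x⁻¹ : G7 K) : M7 K)) i i = 0 := by
    rw [Units.val_mul, h, Matrix.diagonal_mul, h0, zero_mul]
  rw [mul_inv_cancel] at this
  simp at this

theorem lang [IsAlgClosed K] {φ : K →+* K} {e : ℕ} (hφ : ∀ x, φ x = x ^ (9 * e)) {g₁ g₂ : G7 K}
    (hg₁ : (g₁, mapG φ g₁) ∈ GG K) (hg₂ : (g₂, mapG φ g₂) ∈ GG K)
    {x₁ x₂ : G7 K × G7 K} (hx₁ : x₁ ∈ GG K) (hx₂ : x₂ ∈ GG K) {a b : K} (ha : a ≠ 0) (hb : b ≠ 0)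
    (h₁ : (g₁ : M7 K) * (x₁.1 : M7 K) = (x₁.1 : M7 K) * Tm a b)
    (h₂ : (g₂ : M7 K) * (x₂.1 : M7 K) = (x₂.1 : M7 K) * Tm a b)
    (i1 : Function.Injective (dT a b)) (i2 : Function.Injective (dT (a * b^2) (a * b⁻¹))) :
    ∃ x : G7 K, (x, mapG φ x) ∈ GG K ∧ x * g₁ = g₂ * x := by
  set S : G7 K := mkG (Tm a b) (det_Tm a b ha hb) with hS
  set R : G7 K := mkG (Tm (a * b^2) (a * b⁻¹)) (det_Tm _ _ (T2_ne ha hb).1 (T2_ne ha hb).2) with hR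
  have hSR : (S, R) ∈ GG K := GG_Tm a b ha hb
  have step : ∀ {g : G7 K} {x : G7 K × G7 K}, (g, mapG φ g) ∈ GG K → x ∈ GG K →
      (g : M7 K) * (x.1 : M7 K) = (x.1 : M7 K) * Tm a b →
      x.1⁻¹ * g * x.1 = S ∧ (x.2⁻¹ * mapG φ x.1) * mapG φ S = R * (x.2⁻¹ * mapG φ x.1) ∧
      Aut ((x.2⁻¹ * mapG φ x.1 : G7 K) : M7 K) := by
    intro g x hg hx h
    have h' : g * x.1 = x.1 * S := Units.ext h
    have q1 : x.1⁻¹ * g * x.1 = S := by rw [mul_assoc, h', inv_mul_cancel_left]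
    have q2 := GG_unique (mul_mem (mul_mem (inv_mem hx) hg) hx) hSR q1
    simp only [Prod.snd_mul, Prod.snd_inv] at q2
    refine ⟨q1, ?_, ?_⟩
    · have : mapG φ g * mapG φ x.1 = mapG φ x.1 * mapG φ S := by rw [← map_mul, h', map_mul]
      rw [← q2, mul_assoc, ← this]
      group
    · exact (GG_prop (mul_mem (inv_mem (GG_frob hx)) (GG_map φ hx))).1.1
  obtain ⟨p1, n1, A1⟩ := step hg₁ hx₁ h₁
  obtain ⟨p2, n2, A2⟩ := step hg₂ hx₂ h₂
  set N₁ := x₁.2⁻¹ * mapG φ x₁.1 with hN₁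
  set N₂ := x₂.2⁻¹ * mapG φ x₂.1 with hN₂
  -- the element d
  have hdR : (N₂ * N₁⁻¹) * R = R * (N₂ * N₁⁻¹) := by
    have : N₁⁻¹ * R = mapG φ S * N₁⁻¹ := by
      rw [inv_mul_eq_iff_eq_mul, ← mul_assoc, n1, mul_inv_cancel_right]
    rw [mul_assoc, this, ← mul_assoc, n2, mul_assoc]
  have hdA : Aut ((N₂ * N₁⁻¹ : G7 K) : M7 K) := by
    rw [Units.val_mul]; exact A2.mul A1.inv
  have hdD := comm_diag (d := ((N₂ * N₁⁻¹ : G7 K) : M7 K)) i2 (by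
    have := congrArg Units.val hdR
    rw [Units.val_mul _ R, Units.val_mul R] at this
    exact this)
  obtain ⟨hp, hs, hd⟩ := diag_Tm hdA hdD (diag_ne hdD 0)
  set p := ((N₂ * N₁⁻¹ : G7 K) : M7 K) 1 1
  set s := ((N₂ * N₁⁻¹ : G7 K) : M7 K) 2 2
  -- the monomial action
  have hφS : (mapG φ S : M7 K) = Matrix.diagonal (fun i => φ (dT a b i)) := by
    rw [mapG_val, hS, mkG_val, Tm_dT, Matrix.diagonal_map (map_zero φ)]
  obtain ⟨κ, hκ⟩ := monomial_of (N := N₁) (f := fun i => φ (dT a b i))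
    (r := dT (a * b^2) (a * b⁻¹)) (fun i j h => i1 (φ.injective h)) (by
      have := congrArg Units.val n1
      rw [Units.val_mul, Units.val_mul, hφS] at this
      exact this)
  obtain ⟨y, z, hy, hz, e1, e2⟩ := solve e κ hp hs
  rw [← hφ, ← hφ] at e1 e2
  have hy' : φ y ≠ 0 := (map_ne_zero φ).2 hy
  have hz' : φ z ≠ 0 := (map_ne_zero φ).2 hz
  set s' : G7 K := mkG (Tm y z) (det_Tm y z hy hz) with hs'
  have hφs : (mapG φ s' : M7 K) = Matrix.diagonal (dT (φ y) (φ z)) := by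
    rw [mapG_val, hs', mkG_val, map_Tm]; rfl
  -- conjugate of φ s'
  have hc : ((N₁ * mapG φ s' * N₁⁻¹ : G7 K) : M7 K) = Matrix.diagonal (dT (φ y) (φ z) ∘ κ) := by
    rw [Units.val_mul, Units.val_mul, hφs, hκ, Matrix.mul_assoc, ← Units.val_mul, mul_inv_cancel,
      Units.val_one, Matrix.mul_one]
  have hcA : Aut ((N₁ * mapG φ s' * N₁⁻¹ : G7 K) : M7 K) := by
    rw [Units.val_mul, Units.val_mul]
    exact (A1.mul (GG_prop (GG_map φ (GG_Tm y z hy hz))).1.1).mul A1.inv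
  obtain ⟨-, -, hc'⟩ := diag_Tm hcA hc (diag_ne hc 0)
  set rs : G7 K := mkG (Tm (y * z^2) (y * z⁻¹)) (det_Tm _ _ (T2_ne hy hz).1 (T2_ne hy hz).2) with hrs
  have key : rs = N₂ * mapG φ s' * N₁⁻¹ := by
    have : N₂ * mapG φ s' * N₁⁻¹ = (N₂ * N₁⁻¹) * (N₁ * mapG φ s' * N₁⁻¹) := by group
    rw [this]
    apply Units.ext
    rw [Units.val_mul (N₂ * N₁⁻¹), hd, hc', Tm_mul, hrs, mkG_val, e1, e2]
    rfl
  have hm := mul_mem (mul_mem hx₂ (GG_Tm y z hy hz)) (inv_mem hx₁)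
  refine ⟨x₂.1 * s' * x₁.1⁻¹, ?_, ?_⟩
  · convert hm using 1
    refine Prod.ext rfl ?_
    change mapG φ (x₂.1 * s' * x₁.1⁻¹) = x₂.2 * rs * x₁.2⁻¹
    rw [key, hN₁, hN₂, map_mul, map_mul, map_inv]
    group
  · have e1 : x₁.1⁻¹ * g₁ = S * x₁.1⁻¹ := by rw [← p1]; group
    have e2 : g₂ * x₂.1 = x₂.1 * S := by rw [← p2]; group
    have e3 : s' * S = S * s' := by
      apply Units.ext
      rw [Units.val_mul, Units.val_mul, hS, hs', mkG_val, mkG_val, Tm_mul, Tm_mul, mul_comm y, mul_comm z]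
    rw [mul_assoc, e1, ← mul_assoc, ← mul_assoc, mul_assoc x₂.1, e3, ← mul_assoc, ← mul_assoc, e2]

end lang
end RX

namespace RX

section descent

theorem map_ad {R S : Type*} [Field R] [Field S] (f : R →+* S) (v : Fin 7 → R) :
    (ad v).map f = ad (f ∘ v) := by
  ext i j; fin_cases i <;> fin_cases j <;> simp [ad]
theorem map_DM {R S : Type*} [Field R] [Field S] (f : R →+* S) (v : Fin 7 → R) :
    (DM v).map f = DM (f ∘ v) := by
  ext i j; fin_cases i <;> fin_cases j <;> simp [DM]
theorem map_Jm {R S : Type*} [Field R] [Field S] (f : R →+* S) :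
    (Jm : M7 R).map f = Jm := by
  ext i j; fin_cases i <;> fin_cases j <;> simp [Jm]
theorem map_omM {R S : Type*} [Field R] [Field S] (f : R →+* S) (A : M7 R) :
    omM (A.map f) = f ∘ omM A := by
  ext i; fin_cases i <;> simp [omM]

theorem map_vec {R S : Type*} [Field R] [Field S] (f : R →+* S) (A : M7 R) (v : Fin 7 → R) :
    f ∘ (A *ᵥ v) = A.map f *ᵥ (f ∘ v) := by
  ext i; exact RingHom.map_mulVec f A v i

theorem map_injM {R S : Type*} [Field R] [Field S] (f : R →+* S) {A B : M7 R}
    (h : A.map f = B.map f) : A = B := by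
  ext i j
  exact f.injective (congrFun (congrFun h i) j)

theorem good_desc {F K : Type*} [Field F] [Field K] {ι : F →+* K} {φ : F →+* F} {φK : K →+* K}
    (hφ : ∀ x, φK (ι x) = ι (φ x)) {x : G7 F}
    (h : Good φK ((mapG ι x : G7 K) : M7 K)) : Good φ (x : M7 F) := by
  obtain ⟨⟨hA, hO⟩, hI⟩ := h
  refine ⟨⟨?_, ?_⟩, ?_⟩
  · intro v
    have := hA (ι ∘ v)
    apply map_injM ι
    rw [Matrix.map_mul, Matrix.map_mul, map_ad, map_ad, map_vec]
    exact this
  · apply map_injM ι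
    rw [Matrix.map_mul, Matrix.map_mul, map_Jm, Matrix.transpose_map]
    exact hO
  · intro c
    obtain ⟨w, hw⟩ := hI (ι ∘ c)
    have hw2 : w = ι ∘ omM ((x : M7 F) * DM c * ((x⁻¹ : G7 F) : M7 F)) := by
      rw [← map_omM, Matrix.map_mul, Matrix.map_mul, map_DM]
      rw [← mapG_val, ← mapG_val, hw, Matrix.mul_assoc, ← Units.val_mul, ← map_mul, mul_inv_cancel,
        map_one, Units.val_one, Matrix.mul_one, omM_eq]
    refine ⟨omM ((x : M7 F) * DM c * ((x⁻¹ : G7 F) : M7 F)), ?_⟩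
    apply map_injM ι
    rw [Matrix.map_mul, Matrix.map_mul, Matrix.map_add _ (map_add ι), map_DM, map_DM, map_ad, map_vec, ← hw2,
      ← mapG_val, hw]
    congr 3
    congr 1
    ext i j
    simp [mapG_val, hφ]

theorem mem_range_of_pow {F K : Type*} [Field F] [Fintype F] [Field K] (ι : F →+* K) {x : K}
    (h : x ^ Fintype.card F = x) : ∃ a, ι a = x := by
  classical
  have hne : (Polynomial.X ^ Fintype.card F - Polynomial.X : Polynomial K) ≠ 0 :=
    FiniteField.X_pow_card_sub_X_ne_zero K Fintype.one_lt_card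
  set P : Polynomial K := Polynomial.X ^ Fintype.card F - Polynomial.X with hP
  have hsub : Finset.univ.image ι ⊆ P.roots.toFinset := by
    intro y hy
    obtain ⟨a, -, rfl⟩ := Finset.mem_image.1 hy
    rw [Multiset.mem_toFinset, Polynomial.mem_roots hne]
    simp [hP, Polynomial.IsRoot, ← map_pow, FiniteField.pow_card]
  have hcard : P.roots.toFinset.card ≤ (Finset.univ.image ι).card := by
    rw [Finset.card_image_of_injective _ ι.injective, Finset.card_univ]
    refine (Multiset.toFinset_card_le _).trans ((Polynomial.card_roots' _).trans ?_)
    rw [FiniteField.X_pow_card_sub_X_natDegree_eq K Fintype.one_lt_card]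
  have heq := Finset.eq_of_subset_of_card_le hsub hcard
  have : x ∈ P.roots.toFinset := by
    rw [Multiset.mem_toFinset, Polynomial.mem_roots hne]
    simp [hP, Polynomial.IsRoot, h]
  rw [← heq] at this
  obtain ⟨a, -, ha⟩ := Finset.mem_image.1 this
  exact ⟨a, ha⟩

theorem descend {F K : Type*} [Field F] [Fintype F] [Field K] [CharP F 3] [CharP K 3] (m : ℕ)
    (hF : Fintype.card F = 3 ^ (2 * m + 1)) (ι : F →+* K) (h : Twist (3^m) (iterateFrobenius F 3 (m+1)))
    {x : G7 K} (hx : (x, mapG (iterateFrobenius K 3 (m+1)) x) ∈ GG K) :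
    ∃ x₀ ∈ ReeGroup (F := F) (3 ^ m), mapG ι x₀ = x := by
  have hu := GG_unique (GG_frob hx) (GG_map (iterateFrobenius K 3 (m+1)) hx) rfl
  have hent : ∀ i j, ∃ a, ι a = (x : M7 K) i j := by
    intro i j
    apply mem_range_of_pow ι
    have := congrArg (fun u : G7 K => (u : M7 K) i j) hu
    change frobenius K 3 ((x : M7 K) i j) = iterateFrobenius K 3 (m+1) (iterateFrobenius K 3 (m+1) ((x : M7 K) i j)) at this
    rw [iterateFrobenius_def, iterateFrobenius_def, ← pow_mul, ← pow_add,
      show m + 1 + (m + 1) = (2 * m + 1) + 1 by ring, pow_succ, pow_mul, ← frobenius_def, ← hF] at this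
    exact (frobenius_inj K 3 this).symm
  choose X hX using hent
  have hXm : (Matrix.of X).map ι = (x : M7 K) := by ext i j; exact hX i j
  have hdet : (Matrix.of X).det = 1 := by
    apply ι.injective
    rw [RingHom.map_det, RingHom.mapMatrix_apply, hXm, map_one]
    exact (GG_prop hx).2.2
  have hval : mapG ι (mkG (Matrix.of X) hdet) = x := by
    apply Units.ext
    rw [mapG_val, mkG_val, hXm]
  refine ⟨mkG (Matrix.of X) hdet, ?_, hval⟩
  refine good_ree h (good_desc (ι := ι) (φK := iterateFrobenius K 3 (m+1)) ?_ ?_)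
  · intro y; rw [iterateFrobenius_def, iterateFrobenius_def, map_pow]
  · rw [hval]
    exact ⟨(GG_prop hx).1, (GG_prop hx).2.1⟩

theorem mapG_inj {R S : Type*} [Field R] [Field S] (f : R →+* S) {A B : G7 R}
    (h : mapG f A = mapG f B) : A = B :=
  Units.ext (map_injM f (congrArg Units.val h))

theorem conj_trace {K : Type*} [Field K] {g x : G7 K} {T : M7 K}
    (h : (g : M7 K) * (x : M7 K) = (x : M7 K) * T) : (g : M7 K).trace = T.trace := by
  have : T = ((x⁻¹ : G7 K) : M7 K) * ((g : M7 K) * (x : M7 K)) := by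
    rw [h, ← Matrix.mul_assoc, ← Units.val_mul, inv_mul_cancel, Units.val_one, Matrix.one_mul]
  rw [this, Matrix.trace_mul_comm, Matrix.mul_assoc, ← Units.val_mul, mul_inv_cancel, Units.val_one,
    Matrix.mul_one]

/-- second trace of the torus representative -/
theorem conj_trace2 {K : Type*} [Field K] [CharP K 3] {φ : K →+* K} {g : G7 K} (hg : (g, mapG φ g) ∈ GG K)
    {x : G7 K × G7 K} (hx : x ∈ GG K) {a b : K} (ha : a ≠ 0) (hb : b ≠ 0)
    (h : (g : M7 K) * (x.1 : M7 K) = (x.1 : M7 K) * Tm a b) :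
    (Tm (a * b^2) (a * b⁻¹)).trace = φ (Tm a b).trace := by
  have h' : x.1⁻¹ * g * x.1 = mkG (Tm a b) (det_Tm a b ha hb) := by
    rw [mul_assoc, inv_mul_eq_iff_eq_mul]; exact Units.ext h
  have q2 := GG_unique (mul_mem (mul_mem (inv_mem hx) hg) hx) (GG_Tm a b ha hb) h'
  simp only [Prod.snd_mul, Prod.snd_inv] at q2
  rw [mul_assoc, inv_mul_eq_iff_eq_mul] at q2
  have := conj_trace (congrArg Units.val q2)
  rw [← conj_trace h]
  rw [mkG_val] at this
  rw [← this, mapG_val]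
  exact (AddMonoidHom.map_trace φ _).symm

end descent
end RX

namespace RX

section final

theorem TC.apply {K : Type*} [Field K] [CharP K 3] {g : G7 K} {x : G7 K × G7 K} (hx : x ∈ GG K)
    {a b a' b' : K} (h : (g : M7 K) * (x.1 : M7 K) = (x.1 : M7 K) * Tm a b) (ht : TC a b a' b') :
    ∃ y ∈ GG K, (g : M7 K) * (y.1 : M7 K) = (y.1 : M7 K) * Tm a' b' := by
  obtain ⟨n, hn, e⟩ := ht
  refine ⟨x * n, mul_mem hx hn, ?_⟩
  simp only [Prod.fst_mul, Units.val_mul]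
  rw [← Matrix.mul_assoc, h, Matrix.mul_assoc, e, Matrix.mul_assoc]

theorem twistF {F : Type*} [Field F] [Fintype F] [CharP F 3] (m : ℕ)
    (hF : Fintype.card F = 3 ^ (2 * m + 1)) : Twist (3^m) (iterateFrobenius F 3 (m+1)) := by
  constructor
  · intro x; rw [iterateFrobenius_def, ← pow_mul, pow_succ]
  · intro x
    rw [iterateFrobenius_def, ← pow_mul, ← pow_add, show m + (m + 1) = 2 * m + 1 by ring, ← hF,
      FiniteField.pow_card]

theorem sqF {F : Type*} [Field F] [Fintype F] [CharP F 3] (m : ℕ)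
    (hF : Fintype.card F = 3 ^ (2 * m + 1)) (l : Fˣ) : ∃ u : Fˣ, l = u ^ 2 ∨ l = - u ^ 2 := by
  have h2 : ringChar F ≠ 2 := by
    rw [ringChar.eq F 3]; norm_num
  have hq : (3 : ℕ) ^ (2 * m + 1) % 4 = 3 := by
    rw [pow_succ, pow_mul, Nat.mul_mod, Nat.pow_mod]; norm_num
  have hl := FiniteField.pow_dichotomy h2 l.ne_zero
  rw [hF] at hl
  set q := (3 : ℕ) ^ (2 * m + 1)
  refine ⟨l ^ ((q + 1) / 4), ?_⟩
  have e : (q + 1) / 4 * 2 = q / 2 + 1 := by omega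
  rw [← pow_mul, e, pow_succ]
  rcases hl with h | h
  · left; apply Units.ext; simp [h]
  · right; apply Units.ext; simp [h]

theorem cardF_char {F : Type*} [Field F] [Fintype F] (k : ℕ) (hF : Fintype.card F = 3 ^ (k + 1)) :
    CharP F 3 := by
  obtain ⟨p, hp⟩ := CharP.exists F
  have := hp
  have hpp : p.Prime := CharP.char_is_prime F p
  obtain ⟨n, hn, h⟩ := FiniteField.card F p
  rw [hF] at h
  have : p ∣ 3 ^ (k + 1) := by rw [h]; exact dvd_pow_self _ n.ne_zero
  have := (Nat.prime_dvd_prime_iff_eq hpp Nat.prime_three).1 (hpp.dvd_of_dvd_pow this)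
  rwa [this] at hp

theorem main (m : ℕ) (hm : 0 < m) (F : Type*) [Field F] [Fintype F] [CharP F 3]
    {K : Type*} [Field K] [IsAlgClosed K] [CharP K 3] (ι : F →+* K)
    (hF : Fintype.card F = 3 ^ (2 * m + 1)) (g₁ g₂ : GL (Fin 7) F)
    (hg₁ : g₁ ∈ ReeGroup (F := F) (3 ^ m)) (hg₂ : g₂ ∈ ReeGroup (F := F) (3 ^ m))
    (o₁ : Nat.Coprime (orderOf g₁) 3) (o₂ : Nat.Coprime (orderOf g₂) 3)
    (htr : Matrix.trace (g₁ : Matrix (Fin 7) (Fin 7) F) = Matrix.trace (g₂ : Matrix (Fin 7) (Fin 7) F)) :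
    ∃ x ∈ ReeGroup (F := F) (3 ^ m), x⁻¹ * g₁ * x = g₂ := by
  have hT := twistF m hF
  have h3 : (3 : K) = 0 := CharP.cast_eq_zero K 3
  set φ : K →+* K := iterateFrobenius K 3 (m+1) with hφd
  have hGG : ∀ {g : G7 F}, g ∈ ReeGroup (F := F) (3 ^ m) → (mapG ι g, mapG φ (mapG ι g)) ∈ GG K := by
    intro g hg
    have := GG_map ι (ree_GG hT hg)
    convert this using 2
    apply Units.ext
    ext i j
    simp only [mapG_val, Matrix.map_apply, hφd, iterateFrobenius_def, map_pow]
  have hdz : ∀ {g : G7 F}, g ∈ ReeGroup (F := F) (3 ^ m) → Nat.Coprime (orderOf g) 3 →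
      ∃ x ∈ GG K, ∃ y z : K, y ≠ 0 ∧ z ≠ 0 ∧
      ((mapG ι g : G7 K) : M7 K) * (x.1 : M7 K) = (x.1 : M7 K) * Tm y z := by
    intro g hg ho
    refine diagz (n := orderOf g) (hGG hg) ?_ ?_
    · intro h
      rw [CharP.cast_eq_zero_iff K 3] at h
      have := Nat.Coprime.eq_one_of_dvd (Nat.Coprime.symm ho) h
      omega
    · change (mapG ι g) ^ orderOf g = 1
      rw [← map_pow, pow_orderOf_eq_one, map_one]
  obtain ⟨x₁, hx₁, a₁, b₁, ha₁, hb₁, c₁⟩ := hdz hg₁ o₁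
  obtain ⟨x₂, hx₂, a, b, ha, hb, c₂⟩ := hdz hg₂ o₂
  have t₁ := conj_trace c₁
  have t₂ := conj_trace c₂
  have s₁ := conj_trace2 (hGG hg₁) hx₁ ha₁ hb₁ c₁
  have s₂ := conj_trace2 (hGG hg₂) hx₂ ha hb c₂
  have trι : ∀ g : G7 F, ((mapG ι g : G7 K) : M7 K).trace = ι ((g : M7 F).trace) := fun g =>
    (AddMonoidHom.map_trace ι _).symm
  have heq : (Tm a₁ b₁).trace = (Tm a b).trace := by
    rw [← t₁, ← t₂, trι, trι, htr]
  have htc := weyl ha₁ hb₁ ha hb heq (by rw [s₁, s₂, heq])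
  obtain ⟨x₁', hx₁', c₁'⟩ := TC.apply hx₁ c₁ htc
  have hσ2 : φ (Tm (a * b^2) (a * b⁻¹)).trace = (Tm a b).trace ^ 3 := by
    rw [s₂, ← t₂, trι, hφd, iterateFrobenius_def, iterateFrobenius_def, ← pow_mul, ← pow_add,
      show m + 1 + (m + 1) = (2 * m + 1) + 1 by ring, pow_succ, pow_mul, ← hF, ← map_pow,
      FiniteField.pow_card]
  by_cases n1 : (Tm a b).trace = 1
  · -- both trivial
    have htt : TC a b 1 1 := by
      apply weyl ha hb one_ne_zero one_ne_zero
      · rw [n1, trace_Tm]; norm_num; grind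
      · rw [s₂, n1, trace_Tm]; norm_num; grind
    have triv : ∀ {g : G7 F} {x : G7 K × G7 K}, x ∈ GG K →
        ((mapG ι g : G7 K) : M7 K) * (x.1 : M7 K) = (x.1 : M7 K) * Tm a b → g = 1 := by
      intro g x hx h
      obtain ⟨y, hy, e⟩ := TC.apply hx h htt
      rw [Tm_one, Matrix.mul_one] at e
      have e' : mapG ι g * y.1 = y.1 := Units.ext e
      apply mapG_inj ι
      rw [map_one]; exact mul_eq_right.1 e'
    refine ⟨1, one_mem _, ?_⟩
    rw [triv hx₁' c₁', triv hx₂ c₂]; group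
  by_cases n2 : (Tm a b).trace = -1
  · have htt : TC a b 1 (-1) := by
      apply weyl ha hb one_ne_zero (neg_ne_zero.2 one_ne_zero)
      · rw [n2, trace_Tm]; norm_num
      · rw [s₂, n2, trace_Tm]; norm_num
    have inv : ∀ {g : G7 F} {x : G7 K × G7 K}, g ∈ ReeGroup (F := F) (3 ^ m) → x ∈ GG K →
        ((mapG ι g : G7 K) : M7 K) * (x.1 : M7 K) = (x.1 : M7 K) * Tm a b →
        ∃ y ∈ ReeGroup (F := F) (3 ^ m), (g : M7 F) * (y : M7 F) = (y : M7 F) * Tm 1 (-1) := by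
      intro g x hg hx h
      obtain ⟨y, hy, e⟩ := TC.apply hx h htt
      have n0 : (-1 : K) ≠ 0 := neg_ne_zero.2 one_ne_zero
      have e' : mapG ι g * y.1 = y.1 * mkG (Tm 1 (-1)) (det_Tm 1 (-1) one_ne_zero n0) := Units.ext e
      have TT : mkG (Tm 1 (-1)) (det_Tm 1 (-1) one_ne_zero n0) *
          mkG (Tm 1 (-1)) (det_Tm 1 (-1) one_ne_zero n0) = (1 : G7 K) := by
        apply Units.ext
        rw [Units.val_mul, mkG_val, Tm_mul, Units.val_one]
        norm_num [Tm_one]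
      refine involution hT (Odd.pow (by decide)) (sqF m hF) hg ?_ ?_
      · apply mapG_inj ι
        rw [map_mul, map_one]
        have : mapG ι g * mapG ι g * y.1 = y.1 := by
          rw [mul_assoc, e', ← mul_assoc, e', mul_assoc, TT, mul_one]
        exact mul_eq_right.1 this
      · intro hg1
        rw [hg1, map_one, one_mul] at e'
        have e2 := mul_eq_left.1 e'.symm
        have := congrArg (fun u : G7 K => (u : M7 K) 2 2) e2
        simp [Tm] at this
        grind
    obtain ⟨y₁, hy₁, k₁⟩ := inv hg₁ hx₁' c₁'
    obtain ⟨y₂, hy₂, k₂⟩ := inv hg₂ hx₂ c₂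
    have n0 : (-1 : F) ≠ 0 := neg_ne_zero.2 one_ne_zero
    have k₁' : g₁ * y₁ = y₁ * mkG (Tm 1 (-1)) (det_Tm 1 (-1) one_ne_zero n0) := Units.ext k₁
    have k₂' : g₂ * y₂ = y₂ * mkG (Tm 1 (-1)) (det_Tm 1 (-1) one_ne_zero n0) := Units.ext k₂
    refine ⟨y₁ * y₂⁻¹, mul_mem hy₁ (inv_mem hy₂), ?_⟩
    have q : g₂ = y₂ * mkG (Tm 1 (-1)) (det_Tm 1 (-1) one_ne_zero n0) * y₂⁻¹ := by
      rw [← k₂', mul_inv_cancel_right]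
    rw [q, mul_assoc, ← mul_assoc g₁, k₁']
    group
  obtain ⟨i1, i2⟩ := dT_inj' (φ := φ) ha hb s₂ hσ2 n1 n2
  obtain ⟨k, rfl⟩ : ∃ k, m = k + 1 := ⟨m - 1, by omega⟩
  obtain ⟨x, hx, hc⟩ := lang (φ := φ) (e := 3 ^ k)
    (fun x => by rw [hφd, iterateFrobenius_def]; congr 1; ring)
    (hGG hg₁) (hGG hg₂) hx₁' hx₂ ha hb c₁' c₂ i1 i2
  obtain ⟨x₀, hx₀, rfl⟩ := descend (k+1) hF ι hT hx
  refine ⟨x₀⁻¹, inv_mem hx₀, ?_⟩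
  rw [← map_mul, ← map_mul] at hc
  rw [inv_inv, mapG_inj ι hc, mul_inv_cancel_right]

end final
end RX

/-- Elements of `Ree(q)` of order coprime to 3 with the same trace are conjugate in `Ree(q)`. -/
theorem trace_conjugacy (m : ℕ) (hm : 0 < m) (F : Type*) [Field F] [Fintype F]
    (hF : Fintype.card F = 3 ^ (2 * m + 1)) :
    ∀ g₁ g₂ : GL (Fin 7) F, g₁ ∈ ReeGroup (F := F) (3 ^ m) → g₂ ∈ ReeGroup (F := F) (3 ^ m) →
      Nat.Coprime (orderOf g₁) 3 → Nat.Coprime (orderOf g₂) 3 →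
      Matrix.trace (g₁ : Matrix (Fin 7) (Fin 7) F) = Matrix.trace (g₂ : Matrix (Fin 7) (Fin 7) F) →
      ∃ x ∈ ReeGroup (F := F) (3 ^ m), x⁻¹ * g₁ * x = g₂ := by
  have hF3 : CharP F 3 := RX.cardF_char (2 * m) hF
  have hK3 : CharP (AlgebraicClosure F) 3 :=
    charP_of_injective_algebraMap (algebraMap F (AlgebraicClosure F)).injective 3
  intro g₁ g₂ h₁ h₂ o₁ o₂ ht
  exact RX.main m hm F (algebraMap F (AlgebraicClosure F)) hF g₁ g₂ h₁ h₂ o₁ o₂ ht
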